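/- For every n, k ≥ 1, Ramsey's theorem for (n+1)-tuples and k colors is computably reducible to the parallelization of Ramsey's theorem for n-tuples and 2 colors: for every coloring f : [ℕ]^{n+1} → k, there is an f-computable sequence of colorings (g_i : [ℕ]^n → 2)_{i∈ℕ} such that for any sequence (H_i)_{i∈ℕ} of infinite sets with each H_i g_i-homogeneous, f ⊕ (⊕_i H_i) computes an infinite f-homogeneous set. -/

import Mathlib

namespace Paper

/-- Codes for oracle Turing machines. -/
inductive OCode : Type
  | zero | succ | left | right | oracle
  | pair (a b : OCode) | comp (a b : OCode) | prec (a b : OCode) | rfind' (a : OCode)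

/-- Evaluation of an oracle code with oracle `O`. -/
def oeval (O : ℕ → ℕ) : OCode → ℕ →. ℕ
  | .zero => pure 0
  | .succ => Nat.succ
  | .left => ↑fun n : ℕ => n.unpair.1
  | .right => ↑fun n : ℕ => n.unpair.2
  | .oracle => ↑fun n : ℕ => O n
  | .pair cf cg => fun n => Nat.pair <$> oeval O cf n <*> oeval O cg n
  | .comp cf cg => fun n => oeval O cg n >>= oeval O cf
  | .prec cf cg =>
    Nat.unpaired fun a n =>
      n.rec (oeval O cf a) fun y IH => do
        let i ← IH
        oeval O cg (Nat.pair a (Nat.pair y i))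
  | .rfind' cf =>
    Nat.unpaired fun a m =>
      (Nat.rfind fun n => (fun m => m = 0) <$> oeval O cf (Nat.pair a (n + m))).map (· + m)

/-- A numbering of oracle codes. -/
def encodeOCode : OCode → ℕ
  | .zero => 0
  | .succ => 1
  | .left => 2
  | .right => 3
  | .oracle => 4
  | .pair a b => 4 * Nat.pair (encodeOCode a) (encodeOCode b) + 5
  | .comp a b => 4 * Nat.pair (encodeOCode a) (encodeOCode b) + 6
  | .prec a b => 4 * Nat.pair (encodeOCode a) (encodeOCode b) + 7
  | .rfind' a => 4 * encodeOCode a + 8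

/-- The Turing jump of an oracle. -/
def jump (O : ℕ → ℕ) : Set ℕ :=
  { n | ∃ c : OCode, encodeOCode c = n.unpair.1 ∧ (oeval O c n.unpair.2).Dom }

/-- `f` is (total) recursive in the oracle `O`. -/
def RecIn (O : ℕ → ℕ) (f : ℕ → ℕ) : Prop :=
  ∃ c : OCode, ∀ n, oeval O c n = Part.some (f n)

/-- The all-zero (trivial, computable) oracle. -/
def zeroO : ℕ → ℕ := fun _ => 0

/-- Characteristic function of a set of naturals. -/
noncomputable def chi (A : Set ℕ) : ℕ → ℕ := A.indicator fun _ => 1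

/-- Turing join of two oracles. -/
def joinF (f g : ℕ → ℕ) : ℕ → ℕ := fun n => if n % 2 = 0 then f (n / 2) else g (n / 2)

/-- `A` is Σ⁰₁ relative to the oracle `O` (c.e. in `O`). -/
def SigmaIn (O : ℕ → ℕ) (A : Set ℕ) : Prop :=
  ∃ c : OCode, ∀ n, n ∈ A ↔ (oeval O c n).Dom

/-- The halting problem `∅′`. -/
noncomputable def emptyJump : Set ℕ := jump zeroO

end Paper

namespace Paper

/-- Oracle encoding a coloring of finite sets of naturals with `k` colors. -/
noncomputable def colOracle (k : ℕ) (f : Finset ℕ → Fin k) : ℕ → ℕ :=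
  fun m => (f ((Encodable.decode (α := Finset ℕ) m).getD ∅) : ℕ)

/-- `H` is homogeneous for the coloring `f` of `n`-element sets. -/
def Homog (n k : ℕ) (f : Finset ℕ → Fin k) (H : Set ℕ) : Prop :=
  ∃ c : Fin k, ∀ s : Finset ℕ, ↑s ⊆ H → s.card = n → f s = c

/-- Oracle encoding a countable sequence of sets. -/
noncomputable def seqOracle (H : ℕ → Set ℕ) : ℕ → ℕ :=
  fun m => chi (H m.unpair.1) m.unpair.2

end Paper
namespace Paper

/-! ### Basic closure properties of `RecIn` -/

theorem recIn_of_primrec {O : ℕ → ℕ} {f : ℕ → ℕ} (hf : Nat.Primrec f) : RecIn O f := by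
  induction hf with
  | zero => exact ⟨.zero, fun n => rfl⟩
  | succ => exact ⟨.succ, fun n => rfl⟩
  | left => exact ⟨.left, fun n => rfl⟩
  | right => exact ⟨.right, fun n => rfl⟩
  | pair _ _ ha hb =>
    obtain ⟨a, ha⟩ := ha
    obtain ⟨b, hb⟩ := hb
    refine ⟨.pair a b, fun n => ?_⟩
    simp [oeval, ha, hb, Seq.seq]
  | comp _ _ ha hb =>
    obtain ⟨a, ha⟩ := ha
    obtain ⟨b, hb⟩ := hb
    refine ⟨.comp a b, fun n => ?_⟩
    change (oeval O b n).bind (fun x => oeval O a x) = _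
    rw [hb, Part.bind_some, ha]
  | prec _ _ ha hb =>
    obtain ⟨a, ha⟩ := ha
    obtain ⟨b, hb⟩ := hb
    refine ⟨.prec a b, fun n => ?_⟩
    simp only [oeval, Nat.unpaired]
    induction n.unpair.2 with
    | zero => simp [ha]
    | succ m ih =>
      change Part.bind _ _ = _
      rw [ih, Part.bind_some, hb]

theorem RecIn.oracle (O : ℕ → ℕ) : RecIn O O := ⟨.oracle, fun _ => rfl⟩

theorem RecIn.comp {O f g : ℕ → ℕ} (hf : RecIn O f) (hg : RecIn O g) :
    RecIn O (fun n => f (g n)) := by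
  obtain ⟨a, ha⟩ := hf
  obtain ⟨b, hb⟩ := hg
  refine ⟨.comp a b, fun n => ?_⟩
  change (oeval O b n).bind (fun x => oeval O a x) = _
  rw [hb, Part.bind_some, ha]

theorem RecIn.pair {O f g : ℕ → ℕ} (hf : RecIn O f) (hg : RecIn O g) :
    RecIn O (fun n => Nat.pair (f n) (g n)) := by
  obtain ⟨a, ha⟩ := hf
  obtain ⟨b, hb⟩ := hg
  refine ⟨.pair a b, fun n => ?_⟩
  simp [oeval, ha, hb, Seq.seq]

theorem recIn_prim {O : ℕ → ℕ} {f : ℕ → ℕ} (hf : Primrec f) : RecIn O f :=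
  recIn_of_primrec (Primrec.nat_iff.1 hf)

theorem RecIn.prec {O g : ℕ → ℕ} (z : ℕ) (hg : RecIn O g) :
    RecIn O (fun n => Nat.rec z (fun y i => g (Nat.pair y i)) n) := by
  have hz : RecIn O (fun _ => z) := recIn_prim (Primrec.const z)
  have hg' : RecIn O (fun n => g n.unpair.2) :=
    hg.comp (recIn_prim (Primrec.snd.comp Primrec.unpair))
  obtain ⟨a, ha⟩ := hz
  obtain ⟨b, hb⟩ := hg'
  have hp : RecIn O (fun n => Nat.rec z (fun y i => g (Nat.pair y i)) n.unpair.2) := by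
    refine ⟨.prec a b, fun n => ?_⟩
    simp only [oeval, Nat.unpaired]
    induction n.unpair.2 with
    | zero => simp [ha]
    | succ m ih =>
      change Part.bind _ _ = _
      rw [ih, Part.bind_some, hb]
      simp
  have := hp.comp (recIn_prim (O := O) (f := fun n => Nat.pair 0 n)
    (Primrec₂.natPair.comp (Primrec.const 0) Primrec.id))
  simpa using this

theorem RecIn.search {O p : ℕ → ℕ} (hp : RecIn O p) (hex : ∀ a, ∃ n, p (Nat.pair a n) = 0) :
    ∃ h : ℕ → ℕ, RecIn O h ∧ ∀ a, p (Nat.pair a (h a)) = 0 := by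
  classical
  obtain ⟨c, hc⟩ := hp
  have key : RecIn O (fun a => Nat.find (hex a)) := by
    have h1 : ∀ a, oeval O (.rfind' c) (Nat.pair a 0) = Part.some (Nat.find (hex a)) := by
      intro a
      simp only [oeval, Nat.unpaired, Nat.unpair_pair]
      have h2 : ∀ n, ((fun m => decide (m = 0)) <$> (oeval O c (Nat.pair a (n + 0)) : Part ℕ) : Part Bool)
          = Part.some (decide (p (Nat.pair a n) = 0)) := by
        intro n
        rw [hc]
        simp
      have : Nat.find (hex a) ∈ Nat.rfind
          (fun n => Part.some (decide (p (Nat.pair a n) = 0)) : ℕ →. Bool) := by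
        refine Nat.mem_rfind.2 ⟨?_, ?_⟩
        · simp [Nat.find_spec (hex a)]
        · intro m hm
          simpa using Nat.find_min (hex a) hm
      have h3 := Part.eq_some_iff.2 this
      rw [← funext h2] at h3
      change Part.map (· + 0) (Nat.rfind _) = _
      refine (congrArg (Part.map (· + 0)) h3).trans ?_
      simp
    obtain ⟨d, hd⟩ := recIn_prim (O := O) (f := fun n => Nat.pair n 0)
      (Primrec₂.natPair.comp Primrec.id (Primrec.const 0))
    refine ⟨.comp (.rfind' c) d, fun n => ?_⟩
    rw [← h1]
    change (oeval O d n).bind (fun x => oeval O (.rfind' c) x) = _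
    rw [hd, Part.bind_some]
  exact ⟨_, key, fun a => Nat.find_spec (hex a)⟩

theorem RecIn.prefixList {O h : ℕ → ℕ} (hh : RecIn O h) :
    RecIn O (fun s => Encodable.encode ((List.range s).map h)) := by
  have hstep : RecIn O (fun n => (fun q : ℕ => Encodable.encode
      (Denumerable.ofNat (List ℕ) q.unpair.1 ++ [q.unpair.2]))
        (Nat.pair n.unpair.2 (h n.unpair.1))) := by
    refine RecIn.comp (f := fun q : ℕ => Encodable.encode
      (Denumerable.ofNat (List ℕ) q.unpair.1 ++ [q.unpair.2])) (recIn_prim ?_) ?_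
    · refine Primrec.encode.comp (Primrec.list_concat.comp ((Primrec.ofNat _).comp
        (Primrec.fst.comp Primrec.unpair)) (Primrec.snd.comp Primrec.unpair))
    · exact RecIn.pair (recIn_prim (Primrec.snd.comp Primrec.unpair))
        (hh.comp (recIn_prim (Primrec.fst.comp Primrec.unpair)))
  have := hstep.prec (Encodable.encode ([] : List ℕ))
  convert this using 2 with s
  induction s with
  | zero => rfl
  | succ s ih =>
    simp only [] at ih ⊢
    rw [← ih]
    simp [List.range_succ]

/-! ### Truth-table functionals -/

section TT
variable {α β γ δ : Type*} [Primcodable α] [Primcodable β] [Primcodable γ] [Primcodable δ]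

/-- Primitive recursive functionals with a primitive recursive use bound. -/
def TT (F : (ℕ → ℕ) → α → β) : Prop :=
  ∃ (u : α → ℕ) (Φ : List ℕ → α → β), Primrec u ∧ Primrec₂ Φ ∧
    ∀ O a, F O a = Φ ((List.range (u a)).map O) a

theorem TT.of_eq {F G : (ℕ → ℕ) → α → β} (hF : TT F) (h : ∀ O a, F O a = G O a) : TT G := by
  have : F = G := by funext O a; exact h O a
  exact this ▸ hF

theorem TT.of_prim {f : α → β} (hf : Primrec f) : TT (fun _ a => f a) :=
  ⟨fun _ => 0, fun _ a => f a, Primrec.const 0, hf.comp Primrec.snd, fun _ _ => rfl⟩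

theorem TT.query {p : α → ℕ} (hp : Primrec p) : TT (fun O a => O (p a)) := by
  refine ⟨fun a => p a + 1, fun l a => l.getD (p a) 0, Primrec.succ.comp hp, ?_, ?_⟩
  · exact (Primrec.list_getD 0).comp Primrec.fst (hp.comp Primrec.snd)
  · intro O a
    simp [List.getD]

theorem take_prefix (O : ℕ → ℕ) {a b : ℕ} (h : a ≤ b) :
    ((List.range b).map O).take a = (List.range a).map O := by
  rw [← List.map_take, List.take_range, min_eq_left h]

theorem TT.pair {F : (ℕ → ℕ) → α → β} {G : (ℕ → ℕ) → α → γ} (hF : TT F) (hG : TT G) :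
    TT (fun O a => (F O a, G O a)) := by
  obtain ⟨u, Φ, hu, hΦ, h⟩ := hF
  obtain ⟨v, Ψ, hv, hΨ, h'⟩ := hG
  refine ⟨fun a => max (u a) (v a), fun l a => (Φ (l.take (u a)) a, Ψ (l.take (v a)) a),
    Primrec.nat_max.comp hu hv, ?_, ?_⟩
  · exact Primrec.pair
      (hΦ.comp (Primrec.list_take.comp (hu.comp Primrec.snd) Primrec.fst) Primrec.snd)
      (hΨ.comp (Primrec.list_take.comp (hv.comp Primrec.snd) Primrec.fst) Primrec.snd)
  · intro O a
    simp only [take_prefix O (le_max_left (u a) (v a)), take_prefix O (le_max_right (u a) (v a)),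
      h, h']

theorem TT.out {F : (ℕ → ℕ) → α → β} {g : β → γ} (hg : Primrec g) (hF : TT F) :
    TT (fun O a => g (F O a)) := by
  obtain ⟨u, Φ, hu, hΦ, h⟩ := hF
  exact ⟨u, fun l a => g (Φ l a), hu, hg.comp₂ hΦ, fun O a => by simp only [h]⟩

theorem TT.out₂ {F : (ℕ → ℕ) → α → β} {G : (ℕ → ℕ) → α → γ} {g : β → γ → δ} (hg : Primrec₂ g)
    (hF : TT F) (hG : TT G) : TT (fun O a => g (F O a) (G O a)) :=
  TT.out (g := fun p : β × γ => g p.1 p.2) hg (hF.pair hG)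

theorem TT.pre {F : (ℕ → ℕ) → β → γ} (hF : TT F) {p : α → β} (hp : Primrec p) :
    TT (fun O a => F O (p a)) := by
  obtain ⟨u, Φ, hu, hΦ, h⟩ := hF
  exact ⟨fun a => u (p a), fun l a => Φ l (p a), hu.comp hp,
    hΦ.comp Primrec.fst (hp.comp Primrec.snd), fun O a => by simp only [h]⟩

theorem le_foldr_max (l : List ℕ) (f : ℕ → ℕ) (x : ℕ) (hx : x ∈ l) :
    f x ≤ (l.map f).foldr max 0 := by
  induction l with
  | nil => simp at hx
  | cons a l ih =>
    rcases List.mem_cons.1 hx with rfl | h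
    · simp
    · simp only [List.map_cons, List.foldr_cons]
      exact le_trans (ih h) (le_max_right _ _)

theorem TT.map {F : (ℕ → ℕ) → α × ℕ → β} (hF : TT F) {b : α → ℕ} (hb : Primrec b) :
    TT (fun O a => (List.range (b a)).map (fun x => F O (a, x))) := by
  obtain ⟨u, Φ, hu, hΦ, h⟩ := hF
  refine ⟨fun a => ((List.range (b a)).map (fun x => u (a, x))).foldr max 0,
    fun l a => (List.range (b a)).map (fun x => Φ (l.take (u (a, x))) (a, x)), ?_, ?_, ?_⟩
  · refine Primrec.list_foldr (h := fun _ q => max q.1 q.2) (Primrec.list_map (Primrec.list_range.comp hb) hu.to₂)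
      (Primrec.const 0) ?_
    exact Primrec.nat_max.comp (Primrec.fst.comp Primrec.snd) (Primrec.snd.comp Primrec.snd)
  · refine Primrec.list_map (Primrec.list_range.comp (hb.comp Primrec.snd)) ?_
    have h2 : Primrec (fun q : (List ℕ × α) × ℕ => (q.1.2, q.2)) :=
      Primrec.pair (Primrec.snd.comp Primrec.fst) Primrec.snd
    exact hΦ.comp (Primrec.list_take.comp (hu.comp h2) (Primrec.fst.comp Primrec.fst)) h2
  · intro O a
    apply List.map_congr_left
    intro x hx
    simp only [h]
    rw [take_prefix]
    exact le_foldr_max _ (fun x => u (a, x)) x hx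

theorem TT.subst {F : (ℕ → ℕ) → β → γ} {G : (ℕ → ℕ) → α × ℕ → ℕ} (hF : TT F) (hG : TT G)
    {ρ : α → β} (hρ : Primrec ρ) :
    TT (fun O a => F (fun m => G O (a, m)) (ρ a)) := by
  obtain ⟨u, Φ, hu, hΦ, h⟩ := hF
  exact (TT.out₂ hΦ (hG.map (hu.comp hρ)) (TT.of_prim hρ)).of_eq fun O a => by simp only [h]

theorem TT.cont {F : (ℕ → ℕ) → α → β} (hF : TT F) {ι : Type*} {l : Filter ι}
    {Dt : ι → ℕ → ℕ} {D : ℕ → ℕ} (hD : ∀ m, ∀ᶠ t in l, Dt t m = D m) (a : α) :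
    ∀ᶠ t in l, F (Dt t) a = F D a := by
  obtain ⟨u, Φ, hu, hΦ, h⟩ := hF
  have : ∀ᶠ t in l, ∀ m ∈ Finset.range (u a), Dt t m = D m := by
    rw [Filter.eventually_all_finset]
    exact fun m _ => hD m
  filter_upwards [this] with t ht
  rw [h, h]
  congr 1
  apply List.map_congr_left
  intro x hx
  exact ht x (by simpa using hx)

theorem TT.recIn {F : (ℕ → ℕ) → ℕ → ℕ} (hF : TT F) {O h : ℕ → ℕ} (hh : RecIn O h) :
    RecIn O (F h) := by
  obtain ⟨u, Φ, hu, hΦ, e⟩ := hF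
  have : RecIn O (fun n => (fun q : ℕ => Φ (Denumerable.ofNat (List ℕ) q.unpair.1) q.unpair.2)
      (Nat.pair (Encodable.encode ((List.range (u n)).map h)) n)) := by
    refine RecIn.comp (f := fun q : ℕ => Φ (Denumerable.ofNat (List ℕ) q.unpair.1) q.unpair.2)
      (recIn_prim ?_) ?_
    · exact hΦ.comp ((Primrec.ofNat _).comp (Primrec.fst.comp Primrec.unpair))
        (Primrec.snd.comp Primrec.unpair)
    · exact RecIn.pair (hh.prefixList.comp (recIn_prim hu)) (recIn_prim Primrec.id)
  have e2 : F h = _ := funext fun n => e h n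
  rw [e2]
  simpa using this

open Classical in
/-- Truth-table decidable predicates. -/
def TTP (P : (ℕ → ℕ) → α → Prop) : Prop := TT (fun O a => decide (P O a))

theorem TTP.of_iff {P Q : (ℕ → ℕ) → α → Prop} (hP : TTP P) (h : ∀ O a, P O a ↔ Q O a) :
    TTP Q := TT.of_eq hP fun O a => by rw [decide_eq_decide]; exact h O a

theorem TTP.of_prim {P : α → Prop} (hP : PrimrecPred P) : TTP (fun _ a => P a) := by
  obtain ⟨i, hP⟩ := hP
  exact TT.of_eq (TT.of_prim hP) fun O a => by congr

theorem TTP.rel {R : β → γ → Prop} {F : (ℕ → ℕ) → α → β} {G : (ℕ → ℕ) → α → γ}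
    (hR : PrimrecRel R) (hF : TT F) (hG : TT G) : TTP (fun O a => R (F O a) (G O a)) := by
  classical
  have : Primrec₂ (fun a b => decide (R a b)) := hR.decide
  exact TT.of_eq (TT.out₂ this hF hG) fun O a => by congr

theorem TTP.and {P Q : (ℕ → ℕ) → α → Prop} (hP : TTP P) (hQ : TTP Q) :
    TTP (fun O a => P O a ∧ Q O a) :=
  TT.of_eq (TT.out₂ Primrec.and hP hQ) fun O a => by classical rw [Bool.decide_and]

theorem TTP.not {P : (ℕ → ℕ) → α → Prop} (hP : TTP P) : TTP (fun O a => ¬ P O a) :=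
  TT.of_eq (TT.out Primrec.not hP) fun O a => by simp

theorem TTP.imp {P Q : (ℕ → ℕ) → α → Prop} (hP : TTP P) (hQ : TTP Q) :
    TTP (fun O a => P O a → Q O a) :=
  (hP.and hQ.not).not.of_iff fun O a => by tauto

theorem TTP.pre {P : (ℕ → ℕ) → β → Prop} (hP : TTP P) {p : α → β} (hp : Primrec p) :
    TTP (fun O a => P O (p a)) := TT.pre hP hp

theorem TTP.ex {P : (ℕ → ℕ) → α × ℕ → Prop} (hP : TTP P) {b : α → ℕ} (hb : Primrec b) :
    TTP (fun O a => ∃ x < b a, P O (a, x)) := by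
  classical
  have h1 := TT.map hP hb
  have h2 : PrimrecPred (fun L : List Bool => ∃ y ∈ L, y = true) :=
    PrimrecPred.exists_mem_list (p := fun y : Bool => y = true)
      (Primrec.eq.comp Primrec.id (Primrec.const true))
  have h3 : Primrec (fun L : List Bool => decide (∃ y ∈ L, y = true)) := h2.decide
  refine TT.of_eq (TT.out h3 h1) fun O a => ?_
  simp

theorem TTP.all {P : (ℕ → ℕ) → α × ℕ → Prop} (hP : TTP P) {b : α → ℕ} (hb : Primrec b) :
    TTP (fun O a => ∀ x < b a, P O (a, x)) :=
  (TTP.ex hP.not hb).not.of_iff fun O a => by push Not; rfl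

open Classical in
theorem TTP.ite {P : (ℕ → ℕ) → α → Prop} (hP : TTP P) {F G : (ℕ → ℕ) → α → β} (hF : TT F)
    (hG : TT G) : TT (fun O a => if P O a then F O a else G O a) := by
  have h : Primrec (fun q : Bool × (β × β) => if q.1 = true then q.2.1 else q.2.2) :=
    Primrec.ite (Primrec.eq.comp Primrec.fst (Primrec.const true))
      (Primrec.fst.comp Primrec.snd) (Primrec.snd.comp Primrec.snd)
  refine TT.of_eq (TT.out h (TT.pair hP (hF.pair hG))) fun O a => ?_
  simp

/-- least element below a bound satisfying a predicate (or 0). -/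
noncomputable def leastB (P : ℕ → Prop) (b : ℕ) : ℕ := by
  classical exact if h : ∃ x < b, P x then Nat.find h else 0

theorem leastB_spec {P : ℕ → Prop} {b : ℕ} (h : ∃ x < b, P x) :
    leastB P b < b ∧ P (leastB P b) := by
  classical
  unfold leastB
  rw [dif_pos h]
  exact Nat.find_spec h

theorem leastB_min {P : ℕ → Prop} {b x : ℕ} (hx : x < b) (h : P x) : leastB P b ≤ x := by
  classical
  unfold leastB
  rw [dif_pos ⟨x, hx, h⟩]
  exact Nat.find_min' _ ⟨hx, h⟩

theorem leastB_lt {P : ℕ → Prop} {b : ℕ} (hb : 0 < b) : leastB P b < b := by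
  classical
  by_cases h : ∃ x < b, P x
  · exact (leastB_spec h).1
  · unfold leastB
    rwa [dif_neg h]

theorem TTP.least {P : (ℕ → ℕ) → α × ℕ → Prop} (hP : TTP P) {b : α → ℕ} (hb : Primrec b) :
    TT (fun O a => leastB (fun x => P O (a, x)) (b a)) := by
  classical
  have h1 := TT.map hP hb
  have h3 : Primrec₂ (fun (L : List Bool) (n : ℕ) => if L.findIdx (fun y => y) < n then
      L.findIdx (fun y => y) else 0) := by
    have : Primrec (fun q : List Bool × ℕ => q.1.findIdx (fun y => y)) :=
      Primrec.list_findIdx Primrec.fst Primrec.snd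
    exact Primrec.ite (Primrec.nat_lt.comp this Primrec.snd) this (Primrec.const 0)
  refine TT.of_eq (TT.out₂ h3 h1 (TT.of_prim hb)) fun O a => ?_
  set L := (List.range (b a)).map (fun x => decide (P O (a, x))) with hL
  have hlen : L.length = b a := by simp [hL]
  by_cases h : ∃ x < b a, P O (a, x)
  · obtain ⟨h4, h5⟩ := leastB_spec h
    have h6 : L.findIdx (fun y => y) = leastB (fun x => P O (a, x)) (b a) := by
      rw [List.findIdx_eq (by omega)]
      constructor
      · simp [hL, h5]
      · intro j hj
        have : ¬ P O (a, j) := fun hp => by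
          have := leastB_min (P := fun x => P O (a, x)) (b := b a) (x := j) (by omega) hp
          omega
        simp [hL, this]
    rw [h6, if_pos h4]
  · have h6 : ¬ L.findIdx (fun y => y) < b a := by
      intro hlt
      have h7 := List.findIdx_getElem (xs := L) (p := fun y => y) (w := by omega)
      apply h
      refine ⟨_, hlt, ?_⟩
      simpa [hL] using h7
    rw [if_neg h6]
    unfold leastB
    rw [dif_neg h]

end TT

end Paper
namespace Paper

/-! ### Strings in base `M` coded by numbers, most significant digit first -/

/-- The `i`-th digit of the string `w` of length `t`. -/
def dig (M t w i : ℕ) : ℕ := (w / M ^ (t - 1 - i)) % M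

/-- The prefix of length `t` of the sequence `z`. -/
def pre (M : ℕ) (z : ℕ → ℕ) : ℕ → ℕ
  | 0 => 0
  | t + 1 => M * pre M z t + z t

theorem dig_lt {M : ℕ} (hM : 0 < M) (t w i : ℕ) : dig M t w i < M := Nat.mod_lt _ hM

theorem dig_div {M t w i : ℕ} (s : ℕ) (hi : i < t) :
    dig M t (w / M ^ s) i = dig M (t + s) w i := by
  unfold dig
  rw [Nat.div_div_eq_div_mul, ← pow_add]
  congr 3
  omega

theorem dig_div_one {M t w i : ℕ} (hi : i < t) : dig M t (w / M) i = dig M (t + 1) w i := by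
  have := dig_div (M := M) (w := w) 1 hi
  rwa [pow_one] at this

theorem pre_div {M : ℕ} {z : ℕ → ℕ} (hz : ∀ i, z i < M) (t : ℕ) :
    pre M z (t + 1) / M = pre M z t := by
  have hM : 0 < M := lt_of_le_of_lt (Nat.zero_le _) (hz 0)
  rw [pre, Nat.mul_add_div hM, Nat.div_eq_of_lt (hz t), add_zero]

theorem pre_div_pow {M : ℕ} {z : ℕ → ℕ} (hz : ∀ i, z i < M) (t s : ℕ) :
    pre M z (t + s) / M ^ s = pre M z t := by
  induction s with
  | zero => simp
  | succ s ih =>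
    rw [pow_succ', ← Nat.div_div_eq_div_mul, ← add_assoc, pre_div hz, ih]

theorem pre_lt {M : ℕ} {z : ℕ → ℕ} (hz : ∀ i, z i < M) (t : ℕ) : pre M z t < M ^ t := by
  induction t with
  | zero => simp [pre]
  | succ t ih =>
    rw [pre, pow_succ]
    have := hz t
    nlinarith

theorem dig_pre {M : ℕ} {z : ℕ → ℕ} (hz : ∀ i, z i < M) {t i : ℕ} (hi : i < t) :
    dig M t (pre M z t) i = z i := by
  unfold dig
  have : t = (i + 1) + (t - 1 - i) := by omega
  conv_lhs => rw [this]
  rw [show (i + 1 + (t - 1 - i) - 1 - i) = t - 1 - i by omega, pre_div_pow hz, pre,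
    Nat.mul_add_mod, Nat.mod_eq_of_lt (hz i)]

theorem pre_congr {M : ℕ} {y z : ℕ → ℕ} {t : ℕ} (h : ∀ i < t, y i = z i) :
    pre M y t = pre M z t := by
  induction t with
  | zero => rfl
  | succ t ih => rw [pre, pre, ih fun i hi => h i (by omega), h t (by omega)]

theorem stabilizes {a : ℕ → ℕ} (ha : Monotone a) {B : ℕ} (hB : ∀ t, a t ≤ B) :
    ∃ v N, ∀ t ≥ N, a t = v := by
  have hb : BddAbove (Set.range a) := ⟨B, by rintro _ ⟨t, rfl⟩; exact hB t⟩
  obtain ⟨N, hN⟩ := Nat.sSup_mem (Set.range_nonempty a) hb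
  refine ⟨a N, N, fun t ht => le_antisymm ?_ (ha ht)⟩
  rw [hN]
  exact le_csSup hb ⟨t, rfl⟩

theorem leftmost {M : ℕ} (hM : 0 < M) {T : ℕ → ℕ → Prop}
    (hcl : ∀ t w, T (t + 1) w → T t (w / M)) (hne : ∀ t, ∃ w < M ^ t, T t w) :
    ∃ z : ℕ → ℕ, (∀ i, z i < M) ∧ (∀ t, T t (pre M z t)) ∧
      (∀ m, ∀ᶠ t in Filter.atTop, dig M t (leastB (T t) (M ^ t)) m = z m) ∧
      (∀ y : ℕ → ℕ, (∀ i, y i < M) → (∀ t, T t (pre M y t)) → ∀ t, pre M z t ≤ pre M y t) := by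
  set W : ℕ → ℕ := fun t => leastB (T t) (M ^ t) with hW
  have hWlt : ∀ t, W t < M ^ t := fun t => (leastB_spec (hne t)).1
  have hWT : ∀ t, T t (W t) := fun t => (leastB_spec (hne t)).2
  have hcl' : ∀ t s w, T (t + s) w → T t (w / M ^ s) := by
    intro t s
    induction s with
    | zero => intro w h; simpa using h
    | succ s ih =>
      intro w h
      rw [pow_succ', ← Nat.div_div_eq_div_mul]
      exact ih _ (hcl _ _ h)
  have hdivlt : ∀ t s w, w < M ^ (t + s) → w / M ^ s < M ^ t := by
    intro t s w h
    rw [Nat.div_lt_iff_lt_mul (pow_pos hM s), ← pow_add]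
    exact h
  have hstep : ∀ t, W t ≤ W (t + 1) / M := by
    intro t
    apply leastB_min
    · have := hdivlt t 1 _ (hWlt (t + 1)); rwa [pow_one] at this
    · exact hcl _ _ (hWT (t + 1))
  have hmono : ∀ m, Monotone fun s => W (m + s) / M ^ s := by
    intro m
    apply monotone_nat_of_le_succ
    intro s
    rw [pow_succ', ← Nat.div_div_eq_div_mul]
    exact Nat.div_le_div_right (hstep (m + s))
  have hst : ∀ m, ∃ v N, ∀ s ≥ N, W (m + s) / M ^ s = v := fun m =>
    stabilizes (hmono m) (B := M ^ m) fun s => (hdivlt m s _ (hWlt _)).le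
  choose Z N hZ using hst
  have hZdiv : ∀ m, Z (m + 1) / M = Z m := by
    intro m
    have h1 := hZ m (N m + N (m + 1) + 1) (by omega)
    have h2 := hZ (m + 1) (N m + N (m + 1)) (by omega)
    rw [← h1, ← h2, pow_succ, Nat.div_div_eq_div_mul]
    congr 2
    omega
  have hZ0 : Z 0 = 0 := by
    rw [← hZ 0 (N 0) le_rfl]
    apply Nat.div_eq_of_lt
    have := hWlt (0 + N 0)
    rwa [zero_add] at this ⊢
  have hzlt : ∀ i, Z (i + 1) % M < M := fun i => Nat.mod_lt _ hM
  have hpre : ∀ m, pre M (fun i => Z (i + 1) % M) m = Z m := by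
    intro m
    induction m with
    | zero => simp [pre, hZ0]
    | succ m ih => rw [pre, ih, ← hZdiv m, Nat.div_add_mod]
  refine ⟨fun i => Z (i + 1) % M, hzlt, ?_, ?_, ?_⟩
  · intro t
    rw [hpre, ← hZ t (N t) le_rfl]
    exact hcl' _ _ _ (hWT _)
  · intro m
    filter_upwards [Filter.eventually_ge_atTop (m + 1 + N (m + 1))] with t ht
    unfold dig
    have e : m + 1 + (t - 1 - m) = t := by omega
    rw [← hZ (m + 1) (t - 1 - m) (by omega), e]
  · intro y hy hyT t
    rw [hpre, ← hZ t (N t) le_rfl, ← pre_div_pow hy t (N t)]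
    exact Nat.div_le_div_right (leastB_min (pre_lt hy _) (hyT _))

section prim
variable {α : Type*} [Primcodable α]

theorem pow_prim {a b : α → ℕ} (ha : Primrec a) (hb : Primrec b) :
    Primrec (fun x => a x ^ b x) := by
  have : Primrec₂ (fun a b : ℕ => a ^ b) := Primrec₂.unpaired'.1 Nat.Primrec.pow
  exact this.comp ha hb

theorem dig_prim (M : ℕ) {t w i : α → ℕ} (ht : Primrec t) (hw : Primrec w) (hi : Primrec i) :
    Primrec (fun x => dig M (t x) (w x) (i x)) := by
  unfold dig
  exact Primrec.nat_mod.comp (Primrec.nat_div.comp hw (pow_prim (Primrec.const M)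
    (Primrec.nat_sub.comp (Primrec.nat_sub.comp ht (Primrec.const 1)) hi))) (Primrec.const M)

theorem two_mul_prim {a : α → ℕ} (ha : Primrec a) : Primrec (fun x => 2 * a x) :=
  Primrec.nat_mul.comp (Primrec.const 2) ha

theorem two_mul_add_prim {a : α → ℕ} (ha : Primrec a) : Primrec (fun x => 2 * a x + 1) :=
  Primrec.succ.comp (two_mul_prim ha)

end prim

end Paper
namespace Paper

/-! ### The levels of the construction -/

/-- Value part at level `q`. -/
structure GoodV (K q : ℕ) (X V : ℕ → ℕ) : Prop where
  bound : ∀ c, V c < K ^ (q + 1)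
  inv : ∀ C, ∃ x ≥ C, ∀ c < C, V c % K ^ q = V (c + 2 ^ x) / K
  top : ∀ c, V c / K ^ q = X c

/-- `x` is compatible with the string coded by `e`. -/
def Q (M κ : ℕ) (V : ℕ → ℕ) (e x : ℕ) : Prop :=
  e.unpair.1 ≤ x ∧ ∀ c < e.unpair.1, 2 * c + 1 < e.unpair.1 →
    dig M e.unpair.1 e.unpair.2 (2 * c + 1) % κ = V (c + 2 ^ x)

/-- Oracle `D` at level `q`, packing values and jump bits. -/
structure Good (K M q : ℕ) (X D : ℕ → ℕ) : Prop where
  val : GoodV K q X (fun c => D (2 * c + 1))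
  jmp : ∀ e, D (2 * e) ≠ 0 ↔ ∃ x, Q M (K ^ (q + 1)) (fun c => D (2 * c + 1)) e x

/-- The tree of possible next-level values. -/
def TA (K M : ℕ) (D : ℕ → ℕ) (t w : ℕ) : Prop :=
  D (2 * Nat.pair t w) ≠ 0 ∧ ∀ c < t, 2 * c + 1 < t → dig M t w (2 * c + 1) / K = D (2 * c + 1)

/-- The tree also guessing jump bits. -/
def TB (K M q : ℕ) (D : ℕ → ℕ) (t w : ℕ) : Prop :=
  TA K M D t w ∧ ∀ e < t, 2 * e < t ∧ dig M t w (2 * e) = 0 → ∀ x < t,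
    ¬ (e.unpair.1 ≤ x ∧ ∀ c < e.unpair.1, 2 * c + 1 < e.unpair.1 →
      (2 * (c + 2 ^ x) + 1 < t ∧ dig M e.unpair.1 e.unpair.2 (2 * c + 1) % K ^ (q + 2) =
        dig M t w (2 * (c + 2 ^ x) + 1)))

section
variable {K M q : ℕ} {X D : ℕ → ℕ}

theorem TA_iff (h : Good K M q X D) {t w : ℕ} : TA K M D t w ↔
    (∃ x ≥ t, ∀ c < t, 2 * c + 1 < t → dig M t w (2 * c + 1) % K ^ (q + 1) = D (2 * (c + 2 ^ x) + 1))
    ∧ ∀ c < t, 2 * c + 1 < t → dig M t w (2 * c + 1) / K = D (2 * c + 1) := by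
  unfold TA
  rw [h.jmp]
  simp only [Q, Nat.unpair_pair, ge_iff_le]

theorem TA_pre (h : Good K M q X D) {y : ℕ → ℕ} (hy : ∀ i, y i < M) {t : ℕ} :
    TA K M D t (pre M y t) ↔
    (∃ x ≥ t, ∀ c < t, 2 * c + 1 < t → y (2 * c + 1) % K ^ (q + 1) = D (2 * (c + 2 ^ x) + 1))
    ∧ ∀ c < t, 2 * c + 1 < t → y (2 * c + 1) / K = D (2 * c + 1) := by
  rw [TA_iff h]
  have e : ∀ c, 2 * c + 1 < t → dig M t (pre M y t) (2 * c + 1) = y (2 * c + 1) :=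
    fun c hc => dig_pre hy hc
  constructor
  · rintro ⟨⟨x, hx, h1⟩, h2⟩
    exact ⟨⟨x, hx, fun c hc hc' => e c hc' ▸ h1 c hc hc'⟩, fun c hc hc' => e c hc' ▸ h2 c hc hc'⟩
  · rintro ⟨⟨x, hx, h1⟩, h2⟩
    exact ⟨⟨x, hx, fun c hc hc' => by rw [e c hc']; exact h1 c hc hc'⟩,
      fun c hc hc' => by rw [e c hc']; exact h2 c hc hc'⟩

theorem TA_closed (h : Good K M q X D) {t w : ℕ} (hT : TA K M D (t + 1) w) :
    TA K M D t (w / M) := by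
  rw [TA_iff h] at hT ⊢
  obtain ⟨⟨x, hx, h1⟩, h2⟩ := hT
  refine ⟨⟨x, by omega, fun c hc hc' => ?_⟩, fun c hc hc' => ?_⟩
  · rw [dig_div_one hc']; exact h1 c (by omega) (by omega)
  · rw [dig_div_one hc']; exact h2 c (by omega) (by omega)

theorem TA_nonempty (h : Good K M q X D) (hK : 2 ≤ K) (hM : K ^ (q + 2) ≤ M) (t : ℕ) :
    ∃ y : ℕ → ℕ, (∀ i, y i < M) ∧ (∀ e, y (2 * e) ≠ 0) ∧ TA K M D t (pre M y t) := by
  obtain ⟨x, hx, hI⟩ := h.val.inv t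
  set V : ℕ → ℕ := fun c => D (2 * c + 1) with hV
  have hb : ∀ c, V c < K ^ (q + 1) := h.val.bound
  have hlt : ∀ c, V (c + 2 ^ x) % K + K * V c < M := by
    intro c
    refine lt_of_lt_of_le ?_ hM
    have h1 : V (c + 2 ^ x) % K < K := Nat.mod_lt _ (by omega)
    have h2 := hb c
    rw [pow_succ']
    nlinarith
  have h1M : 1 < M := lt_of_lt_of_le (Nat.one_lt_pow (by omega) (by omega)) hM
  refine ⟨fun i => if i % 2 = 0 then 1 else V (i / 2 + 2 ^ x) % K + K * V (i / 2), ?_, ?_, ?_⟩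
  · intro i
    dsimp only
    split
    · exact h1M
    · exact hlt _
  · intro e; simp
  · rw [TA_pre h]
    · have e1 : ∀ c, (2 * c + 1) / 2 = c := fun c => by omega
      have e2 : ∀ c, (2 * c + 1) % 2 = 1 := fun c => by omega
      simp only [e1, e2, one_ne_zero, if_false]
      refine ⟨⟨x, hx, fun c hc _ => ?_⟩, fun c hc _ => ?_⟩
      · have h3 := hI c hc
        have h4 : (V (c + 2 ^ x) % K + K * V c) % K ^ (q + 1) = V (c + 2 ^ x) % K + K * (V c % K ^ q) := by
          rw [pow_succ', Nat.mod_mul]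
          congr 1
          · simp
          · rw [Nat.add_mul_div_left _ _ (by omega), Nat.div_eq_of_lt (Nat.mod_lt _ (by omega)), zero_add]
        rw [h4, h3, Nat.mod_add_div]
      · rw [Nat.add_mul_div_left _ _ (by omega), Nat.div_eq_of_lt (Nat.mod_lt _ (by omega)), zero_add]
    · intro i
      split
      · exact h1M
      · exact hlt _

theorem path_goodV (h : Good K M q X D) (hK : 2 ≤ K) {y : ℕ → ℕ} (hy : ∀ i, y i < M)
    (hp : ∀ t, TA K M D t (pre M y t)) : GoodV K (q + 1) X (fun c => y (2 * c + 1)) := by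
  have hdiv : ∀ c, y (2 * c + 1) / K = D (2 * c + 1) := fun c =>
    ((TA_pre h hy).1 (hp (2 * c + 2))).2 c (by omega) (by omega)
  refine ⟨fun c => ?_, fun C => ?_, fun c => ?_⟩
  · have := h.val.bound c
    rw [← hdiv, Nat.div_lt_iff_lt_mul (by omega)] at this
    rwa [pow_succ]
  · obtain ⟨x, hx, h1⟩ := ((TA_pre h hy).1 (hp (2 * C + 1))).1
    refine ⟨x, by omega, fun c hc => ?_⟩
    rw [hdiv]
    exact h1 c (by omega) (by omega)
  · have := h.val.top c
    rw [pow_succ', ← Nat.div_div_eq_div_mul, hdiv, this]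

theorem TB_closed (h : Good K M q X D) {t w : ℕ} (hT : TB K M q D (t + 1) w) :
    TB K M q D t (w / M) := by
  refine ⟨TA_closed h hT.1, ?_⟩
  rintro e he ⟨he1, he2⟩ x hx ⟨hx1, hx2⟩
  rw [dig_div_one he1] at he2
  refine hT.2 e (by omega) ⟨by omega, he2⟩ x (by omega) ⟨hx1, fun c hc hc' => ?_⟩
  obtain ⟨h1, h2⟩ := hx2 c hc hc'
  rw [dig_div_one h1] at h2
  exact ⟨by omega, h2⟩

theorem TB_pre (h : Good K M q X D) {y : ℕ → ℕ} (hy : ∀ i, y i < M) {t : ℕ} :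
    TB K M q D t (pre M y t) ↔ TA K M D t (pre M y t) ∧
    ∀ e, 2 * e < t → y (2 * e) = 0 → ∀ x < t,
    ¬ (e.unpair.1 ≤ x ∧ ∀ c < e.unpair.1, 2 * c + 1 < e.unpair.1 →
      (2 * (c + 2 ^ x) + 1 < t ∧ dig M e.unpair.1 e.unpair.2 (2 * c + 1) % K ^ (q + 2) =
        y (2 * (c + 2 ^ x) + 1))) := by
  unfold TB
  refine and_congr_right fun _ => ?_
  constructor
  · rintro H e he he2 x hx ⟨hx1, hx2⟩
    refine H e (by omega) ⟨he, by rw [dig_pre hy he]; exact he2⟩ x hx ⟨hx1, fun c hc hc' => ?_⟩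
    obtain ⟨h1, h2⟩ := hx2 c hc hc'
    exact ⟨h1, by rw [dig_pre hy h1]; exact h2⟩
  · rintro H e _ ⟨he, he2⟩ x hx ⟨hx1, hx2⟩
    rw [dig_pre hy he] at he2
    refine H e he he2 x hx ⟨hx1, fun c hc hc' => ?_⟩
    obtain ⟨h1, h2⟩ := hx2 c hc hc'
    rw [dig_pre hy h1] at h2
    exact ⟨h1, h2⟩

/-- The approximation of the next level from the previous one. -/
noncomputable def Lstep (K M q : ℕ) (D : ℕ → ℕ) (p : ℕ × ℕ) : ℕ :=
  dig M p.1 (leastB (TB K M q D p.1) (M ^ p.1)) p.2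

theorem level_step (h : Good K M q X D) (hK : 2 ≤ K) (hM : K ^ (q + 2) ≤ M) :
    ∃ D', Good K M (q + 1) X D' ∧
      ∀ m, ∀ᶠ t in Filter.atTop, Lstep K M q D (t, m) = D' m := by
  have h0M : 0 < M := lt_of_lt_of_le (pow_pos (by omega) _) hM
  obtain ⟨z, hz, hzT, hlim, hleft⟩ := leftmost h0M (T := TB K M q D)
    (fun t w => TB_closed h) (fun t => by
      obtain ⟨y, hy, hy0, hyA⟩ := TA_nonempty h hK hM t
      exact ⟨pre M y t, pre_lt hy t, (TB_pre h hy).2 ⟨hyA, fun e _ he => absurd he (hy0 e)⟩⟩)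
  refine ⟨z, ⟨path_goodV h hK hz fun t => (hzT t).1, fun e => ⟨fun hne => ?_, ?_⟩⟩, hlim⟩
  · by_contra hno
    have hup : ∀ i, Function.update z (2 * e) 0 i < M := by
      intro i
      by_cases hi : i = 2 * e
      · subst hi; simpa using h0M
      · rw [Function.update_of_ne hi]; exact hz i
    have hodd : ∀ c, Function.update z (2 * e) 0 (2 * c + 1) = z (2 * c + 1) := fun c =>
      Function.update_of_ne (by omega) _ _
    have hpath : ∀ t, TB K M q D t (pre M (Function.update z (2 * e) 0) t) := by
      intro t
      have hzt := (TB_pre h hz).1 (hzT t)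
      rw [TB_pre h hup]
      refine ⟨?_, ?_⟩
      · have := hzt.1
        rw [TA_pre h hz] at this
        rw [TA_pre h hup]
        simpa only [hodd] using this
      · intro e' he' he0 x hx
        simp only [hodd]
        by_cases hee : e' = e
        · subst hee
          rintro ⟨hx1, hx2⟩
          exact hno ⟨x, hx1, fun c hc hc' => (hx2 c hc hc').2⟩
        · rw [Function.update_of_ne (by omega)] at he0
          exact hzt.2 e' he' he0 x hx
    have := hleft _ hup hpath (2 * e + 1)
    rw [pre, pre, pre_congr (y := Function.update z (2 * e) 0) (z := z) fun i hi =>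
      Function.update_of_ne (by omega) _ _] at this
    simp at this
    exact hne this
  · rintro ⟨x, hx, hQ⟩ h0
    set B := 2 * (e.unpair.1 + 2 ^ x) + 2 * e + x + 2 with hB
    refine ((TB_pre h hz).1 (hzT B)).2 e (by omega) h0 x (by omega) ⟨hx, fun c hc hc' => ?_⟩
    exact ⟨by omega, hQ c hc hc'⟩

open Classical in
/-- Level zero approximations. -/
noncomputable def Lzero (K M : ℕ) (X : ℕ → ℕ) (p : ℕ × ℕ) : ℕ :=
  if p.2 % 2 = 0 then (if ∃ x < p.1, Q M K X (p.2 / 2) x then 1 else 0) else X (p.2 / 2)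

theorem level_zero (hX : ∀ c, X c < K) :
    ∃ D, Good K M 0 X D ∧ ∀ m, ∀ᶠ t in Filter.atTop, Lzero K M X (t, m) = D m := by
  classical
  refine ⟨fun m => if m % 2 = 0 then (if ∃ x, Q M K X (m / 2) x then 1 else 0) else X (m / 2), ?_, ?_⟩
  · have e1 : ∀ c, (2 * c + 1) / 2 = c := fun c => by omega
    have e2 : ∀ c, (2 * c + 1) % 2 = 1 := fun c => by omega
    refine ⟨⟨?_, ?_, ?_⟩, ?_⟩
    · intro c; simp [e1, e2, hX]
    · intro C; exact ⟨C, le_rfl, fun c _ => by simp [e1, e2, hX, Nat.div_eq_of_lt, Nat.mod_one]⟩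
    · intro c; simp [e1, e2]
    · intro e; simp [e1, e2]
  · intro m
    unfold Lzero
    dsimp only
    by_cases hm : m % 2 = 0
    · simp only [hm, if_true]
      by_cases hx : ∃ x, Q M K X (m / 2) x
      · obtain ⟨x, hx⟩ := hx
        filter_upwards [Filter.eventually_gt_atTop x] with t ht
        rw [if_pos ⟨x, ht, hx⟩, if_pos ⟨x, hx⟩]
      · refine Filter.Eventually.of_forall fun t => ?_
        rw [if_neg hx, if_neg fun ⟨x, _, h⟩ => hx ⟨x, h⟩]
    · simp [hm]

end

end Paper
namespace Paper

/-! ### Effectivity of the approximations -/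

section
variable {α : Type*} [Primcodable α]

theorem fst_prim {e : α → ℕ} (he : Primrec e) : Primrec (fun a => (e a).unpair.1) :=
  Primrec.fst.comp (Primrec.unpair.comp he)

theorem snd_prim {e : α → ℕ} (he : Primrec e) : Primrec (fun a => (e a).unpair.2) :=
  Primrec.snd.comp (Primrec.unpair.comp he)

theorem mod_prim {e d : α → ℕ} (he : Primrec e) (hd : Primrec d) : Primrec (fun a => e a % d a) :=
  Primrec.nat_mod.comp he hd

theorem quo_prim {e d : α → ℕ} (he : Primrec e) (hd : Primrec d) : Primrec (fun a => e a / d a) :=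
  Primrec.nat_div.comp he hd

theorem plus_prim {e d : α → ℕ} (he : Primrec e) (hd : Primrec d) : Primrec (fun a => e a + d a) :=
  Primrec.nat_add.comp he hd

theorem npair_prim {e d : α → ℕ} (he : Primrec e) (hd : Primrec d) :
    Primrec (fun a => Nat.pair (e a) (d a)) :=
  Primrec₂.natPair.comp he hd

theorem TTP.lt {e d : α → ℕ} (he : Primrec e) (hd : Primrec d) :
    TTP (fun (_ : ℕ → ℕ) a => e a < d a) :=
  TTP.of_prim (Primrec.nat_lt.comp he hd)

theorem TTP.le {e d : α → ℕ} (he : Primrec e) (hd : Primrec d) :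
    TTP (fun (_ : ℕ → ℕ) a => e a ≤ d a) :=
  TTP.of_prim (Primrec.nat_le.comp he hd)

theorem TTP.eq {F G : (ℕ → ℕ) → α → ℕ} (hF : TT F) (hG : TT G) :
    TTP (fun O a => F O a = G O a) :=
  TTP.rel Primrec.eq hF hG

theorem ppow {x : α → ℕ} (hx : Primrec x) {c : α → ℕ} (hc : Primrec c) :
    Primrec (fun a => c a + 2 ^ x a) :=
  plus_prim hc (pow_prim (Primrec.const 2) hx)

theorem Q_TTP (M κ : ℕ) {e x : α → ℕ} (he : Primrec e) (hx : Primrec x) :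
    TTP (fun O a => Q M κ O (e a) (x a)) := by
  have he' : Primrec (fun p : α × ℕ => e p.1) := he.comp Primrec.fst
  have hx' : Primrec (fun p : α × ℕ => x p.1) := hx.comp Primrec.fst
  have h : TTP (fun O (p : α × ℕ) => 2 * p.2 + 1 < (e p.1).unpair.1 →
      dig M (e p.1).unpair.1 (e p.1).unpair.2 (2 * p.2 + 1) % κ = O (p.2 + 2 ^ x p.1)) :=
    TTP.imp (TTP.lt (two_mul_add_prim Primrec.snd) (fst_prim he'))
      (TTP.eq (TT.of_prim (mod_prim (dig_prim M (fst_prim he') (snd_prim he')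
        (two_mul_add_prim Primrec.snd)) (Primrec.const κ)))
        (TT.query (ppow hx' Primrec.snd)))
  exact (TTP.le (fst_prim he) hx).and (h.all (fst_prim he))

theorem Lzero_TT (K M : ℕ) : TT (Lzero K M) := by
  have h1 : TTP (fun O (p : (ℕ × ℕ) × ℕ) => Q M K O (p.1.2 / 2) p.2) :=
    Q_TTP M K (quo_prim (Primrec.snd.comp Primrec.fst) (Primrec.const 2)) Primrec.snd
  have h2 := h1.ex (b := fun p : ℕ × ℕ => p.1) Primrec.fst
  have h3 := TTP.ite h2 (TT.of_prim (Primrec.const 1)) (TT.of_prim (Primrec.const 0))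
  have h4 : TTP (fun (_ : ℕ → ℕ) (p : ℕ × ℕ) => p.2 % 2 = 0) :=
    TTP.eq (TT.of_prim (mod_prim Primrec.snd (Primrec.const 2))) (TT.of_prim (Primrec.const 0))
  have h5 := TTP.ite h4 h3 (TT.query (quo_prim Primrec.snd (Primrec.const 2)))
  exact h5.of_eq fun O a => by unfold Lzero; congr

theorem TA_TTP (K M : ℕ) {t w : α → ℕ} (ht : Primrec t) (hw : Primrec w) :
    TTP (fun O a => TA K M O (t a) (w a)) := by
  have ht' : Primrec (fun p : α × ℕ => t p.1) := ht.comp Primrec.fst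
  have hw' : Primrec (fun p : α × ℕ => w p.1) := hw.comp Primrec.fst
  have h : TTP (fun O (p : α × ℕ) => 2 * p.2 + 1 < t p.1 →
      dig M (t p.1) (w p.1) (2 * p.2 + 1) / K = O (2 * p.2 + 1)) :=
    TTP.imp (TTP.lt (two_mul_add_prim Primrec.snd) ht')
      (TTP.eq (TT.of_prim (quo_prim (dig_prim M ht' hw'
        (two_mul_add_prim Primrec.snd)) (Primrec.const K)))
        (TT.query (two_mul_add_prim Primrec.snd)))
  exact (TTP.eq (TT.query (two_mul_prim (npair_prim ht hw))) (TT.of_prim (Primrec.const 0))).not.and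
    (h.all ht)

theorem TB_TTP (K M q : ℕ) {t w : α → ℕ} (ht : Primrec t) (hw : Primrec w) :
    TTP (fun O a => TB K M q O (t a) (w a)) := by
  have pt : Primrec (fun p : ((α × ℕ) × ℕ) × ℕ => t p.1.1.1) :=
    ht.comp (Primrec.fst.comp (Primrec.fst.comp Primrec.fst))
  have pw : Primrec (fun p : ((α × ℕ) × ℕ) × ℕ => w p.1.1.1) :=
    hw.comp (Primrec.fst.comp (Primrec.fst.comp Primrec.fst))
  have pe : Primrec (fun p : ((α × ℕ) × ℕ) × ℕ => p.1.1.2) :=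
    Primrec.snd.comp (Primrec.fst.comp Primrec.fst)
  have px : Primrec (fun p : ((α × ℕ) × ℕ) × ℕ => p.1.2) := Primrec.snd.comp Primrec.fst
  have pc : Primrec (fun p : ((α × ℕ) × ℕ) × ℕ => p.2) := Primrec.snd
  have h1 := TTP.imp (TTP.lt (two_mul_add_prim pc) (fst_prim pe))
    ((TTP.lt (two_mul_add_prim (ppow px pc)) pt).and
      (TTP.eq (TT.of_prim (mod_prim (dig_prim M (fst_prim pe) (snd_prim pe) (two_mul_add_prim pc))
        (Primrec.const (K ^ (q + 2)))))
        (TT.of_prim (dig_prim M pt pw (two_mul_add_prim (ppow px pc))))))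
  have qe : Primrec (fun p : (α × ℕ) × ℕ => p.1.2) := Primrec.snd.comp Primrec.fst
  have h2 := ((TTP.le (fst_prim qe) Primrec.snd).and (h1.all (fst_prim qe))).not
  have rt : Primrec (fun p : α × ℕ => t p.1) := ht.comp Primrec.fst
  have rw' : Primrec (fun p : α × ℕ => w p.1) := hw.comp Primrec.fst
  have h3 := h2.all rt
  have h4 := TTP.imp ((TTP.lt (two_mul_prim (Primrec.snd (α := α) (β := ℕ))) rt).and
    (TTP.eq (TT.of_prim (dig_prim M rt rw' (two_mul_prim Primrec.snd)))
      (TT.of_prim (Primrec.const 0)))) h3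
  exact (TA_TTP K M ht hw).and (h4.all ht)

theorem Lstep_TT (K M q : ℕ) : TT (Lstep K M q) := by
  have h1 : TTP (fun O (p : (ℕ × ℕ) × ℕ) => TB K M q O p.1.1 p.2) :=
    TB_TTP K M q (Primrec.fst.comp Primrec.fst) Primrec.snd
  have h2 := h1.least (b := fun p : ℕ × ℕ => M ^ p.1) (pow_prim (Primrec.const M) Primrec.fst)
  have h3 : Primrec₂ (fun (w : ℕ) (p : ℕ × ℕ) => dig M p.1 w p.2) :=
    dig_prim M (Primrec.fst.comp Primrec.snd) Primrec.fst (Primrec.snd.comp Primrec.snd)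
  have h4 := TT.out₂ h3 h2 (TT.of_prim Primrec.id)
  exact h4

end

/-! ### Colorings reducing limits -/

/-- Binary code of a finite set. -/
def bcode (s : Finset ℕ) : ℕ := ∑ i ∈ s, 2 ^ i

theorem bcode_insert {s : Finset ℕ} {t : ℕ} (ht : t ∉ s) :
    bcode (insert t s) = bcode s + 2 ^ t := by
  unfold bcode
  rw [Finset.sum_insert ht, add_comm]

theorem bcode_lt {s : Finset ℕ} {t : ℕ} (h : ∀ i ∈ s, i < t) : bcode s < 2 ^ t := by
  unfold bcode
  exact Nat.geomSum_lt le_rfl h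

theorem log_bcode {s : Finset ℕ} {t : ℕ} (h : ∀ i ∈ s, i < t) :
    Nat.log 2 (bcode s + 2 ^ t) = t := by
  have := bcode_lt h
  rw [Nat.log_eq_iff (Or.inr ⟨by norm_num, by positivity⟩)]
  constructor
  · omega
  · rw [pow_succ]; omega

theorem log_prim : Primrec (Nat.log 2) := by
  have h : TT (fun (_ : ℕ → ℕ) (a : ℕ) => leastB (fun x => a < 2 ^ (x + 1)) (a + 1)) := by
    have h1 : TTP (fun (_ : ℕ → ℕ) (p : ℕ × ℕ) => p.1 < 2 ^ (p.2 + 1)) :=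
      TTP.lt Primrec.fst (pow_prim (Primrec.const 2) (Primrec.succ.comp Primrec.snd))
    exact h1.least (b := fun a => a + 1) Primrec.succ
  obtain ⟨u, Φ, hu, hΦ, e⟩ := h
  have : Primrec (fun a => Φ ((List.range (u a)).map zeroO) a) := by
    refine hΦ.comp ?_ Primrec.id
    exact Primrec.list_map (Primrec.list_range.comp hu) (Primrec.const 0)
  refine this.of_eq fun a => ?_
  rw [← e zeroO a]
  have hex : ∃ x < a + 1, a < 2 ^ (x + 1) :=
    ⟨a, by omega, lt_trans (Nat.lt_two_pow_self) (Nat.pow_lt_pow_right (by norm_num) (by omega))⟩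
  have h1 := leastB_spec hex
  apply le_antisymm
  · refine leastB_min ?_ (Nat.lt_pow_succ_log_self (by norm_num) a)
    exact Nat.lt_succ_of_le (Nat.log_le_self 2 a)
  · exact Nat.lt_succ_iff.1 (Nat.log_lt_of_lt_pow' (by omega) h1.2)

/-- Colorings from the oracle `D` reduce to colorings of larger tuples from `X`. -/
def Red (X D : ℕ → ℕ) (r : ℕ) : Prop :=
  ∀ ψ : (ℕ → ℕ) → ℕ → ℕ, TT ψ → ∃ ψ' : (ℕ → ℕ) → ℕ → ℕ, TT ψ' ∧
    ((∀ O a, ψ O a < 2) → ∀ O a, ψ' O a < 2) ∧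
    ∀ (m i : ℕ) (H : Set ℕ) (col : ℕ), H.Infinite →
      (∀ s : Finset ℕ, ↑s ⊆ H → s.card = m + r → ψ' X (Nat.pair i (bcode s)) = col) →
      ∀ s : Finset ℕ, ↑s ⊆ H → s.card = m → ψ D (Nat.pair i (bcode s)) = col

theorem Red.zero (X : ℕ → ℕ) : Red X X 0 :=
  fun ψ hψ => ⟨ψ, hψ, fun h => h, fun _ _ _ _ _ h => h⟩

theorem Red.succ {X E D : ℕ → ℕ} {r : ℕ} (hr : Red X E r) {L : (ℕ → ℕ) → ℕ × ℕ → ℕ} (hL : TT L)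
    (hlim : ∀ m, ∀ᶠ t in Filter.atTop, L E (t, m) = D m) : Red X D (r + 1) := by
  intro ψ hψ
  have hc : Primrec (fun a : ℕ => Nat.log 2 a.unpair.2) := log_prim.comp (snd_prim Primrec.id)
  have hG : TT (fun O (p : ℕ × ℕ) => L O (Nat.log 2 p.1.unpair.2, p.2)) :=
    hL.pre (Primrec.pair (hc.comp Primrec.fst) Primrec.snd)
  have hρ : Primrec (fun a : ℕ => Nat.pair a.unpair.1 (a.unpair.2 - 2 ^ Nat.log 2 a.unpair.2)) :=
    npair_prim (fst_prim Primrec.id) (Primrec.nat_sub.comp (snd_prim Primrec.id)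
      (pow_prim (Primrec.const 2) hc))
  have h1 := TT.subst hψ hG hρ
  obtain ⟨ψ', hψ', hb, hR⟩ := hr _ h1
  refine ⟨ψ', hψ', fun hlt => hb fun O a => hlt _ _, fun m i H col hH hcol s hs hm => ?_⟩
  have hs1 := hR (m + 1) i H col hH (by
    intro s hs hc
    exact hcol s hs (by omega))
  have hev := TT.cont hψ (Dt := fun t m => L E (t, m)) hlim (Nat.pair i (bcode s))
  obtain ⟨N, hN⟩ := Filter.eventually_atTop.1 hev
  obtain ⟨t, htH, htN⟩ := hH.exists_gt (N + s.sup id)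
  have hlt : ∀ i ∈ s, i < t := fun i hi => by
    have : i ≤ s.sup id := Finset.le_sup (f := id) hi
    omega
  have htS : t ∉ s := fun h => lt_irrefl _ (hlt t h)
  have h2 := hs1 (insert t s) (by
    rw [Finset.coe_insert]; exact Set.insert_subset htH hs) (by
    rw [Finset.card_insert_of_notMem htS, hm])
  simp only [Nat.unpair_pair, bcode_insert htS, log_bcode hlt, Nat.add_sub_cancel] at h2
  rw [← hN t (by omega)]
  exact h2

/-- `D` is a limit of an oracle reducing with parameter `q`. -/
def LimRed (X D : ℕ → ℕ) (q : ℕ) : Prop :=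
  ∃ (E : ℕ → ℕ) (L : (ℕ → ℕ) → ℕ × ℕ → ℕ), Red X E q ∧ TT L ∧
    ∀ m, ∀ᶠ t in Filter.atTop, L E (t, m) = D m

theorem levels {K M n : ℕ} {X : ℕ → ℕ} (hK : 2 ≤ K) (hX : ∀ c, X c < K)
    (hM : K ^ (n + 2) ≤ M) : ∀ q ≤ n, ∃ D, Good K M q X D ∧ LimRed X D q := by
  intro q
  induction q with
  | zero =>
    intro _
    obtain ⟨D, hD, hl⟩ := level_zero (M := M) hX
    exact ⟨D, hD, X, _, Red.zero X, Lzero_TT K M, hl⟩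
  | succ q ih =>
    intro hq
    obtain ⟨D, hD, E, L, hr, hL, hl⟩ := ih (by omega)
    obtain ⟨D', hD', hl'⟩ := level_step hD hK
      (le_trans (Nat.pow_le_pow_right (by omega) (by omega)) hM)
    exact ⟨D', hD', D, _, hr.succ hL hl, Lstep_TT K M q, hl'⟩

end Paper
namespace Paper

/-! ### Selecting a path of the last tree -/

/-- The string `w` of length `m` has no extension of length `m + l` in the tree. -/
def Dead (K M : ℕ) (O : ℕ → ℕ) (m w l : ℕ) : Prop :=
  ∀ v < M ^ l, ¬ TA K M O (m + l) (w * M ^ l + v)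

/-- Stage `t` evidence against the child `a` of `w`. -/
def Bad (K M : ℕ) (O : ℕ → ℕ) (m w a t : ℕ) : Prop :=
  ∃ l < t + 1, Dead K M O (m + 1) (M * w + a) l ∧
    ∃ b < M, a < b ∧ ∀ l' < l + 1, ¬ Dead K M O (m + 1) (M * w + b) l'

section
variable {α : Type*} [Primcodable α]

theorem times_prim {e d : α → ℕ} (he : Primrec e) (hd : Primrec d) : Primrec (fun a => e a * d a) :=
  Primrec.nat_mul.comp he hd

theorem Dead_TTP (K M : ℕ) {m w l : α → ℕ} (hm : Primrec m) (hw : Primrec w) (hl : Primrec l) :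
    TTP (fun O a => Dead K M O (m a) (w a) (l a)) := by
  have hM := pow_prim (Primrec.const M) hl
  have h := (TA_TTP K M (α := α × ℕ) (t := fun p => m p.1 + l p.1)
    (w := fun p => w p.1 * M ^ (l p.1) + p.2) ((plus_prim hm hl).comp Primrec.fst)
    (plus_prim ((times_prim hw hM).comp Primrec.fst) Primrec.snd)).not
  exact h.all hM

theorem Bad_TTP (K M : ℕ) {m w a t : α → ℕ} (hm : Primrec m) (hw : Primrec w) (ha : Primrec a)
    (ht : Primrec t) : TTP (fun O p => Bad K M O (m p) (w p) (a p) (t p)) := by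
  have f1 : Primrec (fun p : α × ℕ => p.1) := Primrec.fst
  have f2 : Primrec (fun p : (α × ℕ) × ℕ => p.1.1) := Primrec.fst.comp Primrec.fst
  have f3 : Primrec (fun p : ((α × ℕ) × ℕ) × ℕ => p.1.1.1) :=
    Primrec.fst.comp (Primrec.fst.comp Primrec.fst)
  have hw' := times_prim (Primrec.const M) hw
  have h1 := (Dead_TTP K M (α := ((α × ℕ) × ℕ) × ℕ) (m := fun p => m p.1.1.1 + 1)
    (w := fun p => M * w p.1.1.1 + p.1.2) (l := fun p => p.2)
    (Primrec.succ.comp (hm.comp f3)) (plus_prim (hw'.comp f3) (Primrec.snd.comp Primrec.fst))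
    Primrec.snd).not
  have h2 := h1.all (b := fun p : (α × ℕ) × ℕ => p.1.2 + 1)
    (Primrec.succ.comp (Primrec.snd.comp Primrec.fst))
  have h3 := ((TTP.lt (ha.comp f2) (Primrec.snd)).and h2).ex (b := fun _ => M) (Primrec.const M)
  have h4 := (Dead_TTP K M (α := α × ℕ) (m := fun p => m p.1 + 1)
    (w := fun p => M * w p.1 + a p.1) (l := fun p => p.2)
    (Primrec.succ.comp (hm.comp f1)) ((plus_prim hw' ha).comp f1) Primrec.snd).and h3
  exact h4.ex (b := fun p => t p + 1) (Primrec.succ.comp ht)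

theorem TTP.cont {P : (ℕ → ℕ) → α → Prop} (hP : TTP P) {ι : Type*} {l : Filter ι}
    {Dt : ι → ℕ → ℕ} {D : ℕ → ℕ} (hD : ∀ m, ∀ᶠ t in l, Dt t m = D m) (a : α) :
    ∀ᶠ t in l, (P (Dt t) a ↔ P D a) := by
  classical
  filter_upwards [TT.cont hP hD a] with t ht
  exact decide_eq_decide.1 ht

end

section
variable {K M q : ℕ} {X D : ℕ → ℕ}

theorem Dead_succ (h : Good K M q X D) {m w l : ℕ} (hd : Dead K M D m w l) :
    Dead K M D m w (l + 1) := by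
  intro v hv hT
  have := TA_closed h (t := m + l) hT
  by_cases hM : M = 0
  · subst hM; simp at hv
  have hM : 0 < M := Nat.pos_of_ne_zero hM
  have e : (w * M ^ (l + 1) + v) / M = w * M ^ l + v / M := by
    rw [pow_succ, ← mul_assoc, mul_comm (w * M ^ l) M, Nat.mul_add_div hM]
  rw [e] at this
  refine hd (v / M) ?_ this
  rw [Nat.div_lt_iff_lt_mul hM, ← pow_succ]
  exact hv

theorem Dead_mono (h : Good K M q X D) {m w l l' : ℕ} (hl : l ≤ l') (hd : Dead K M D m w l) :
    Dead K M D m w l' := by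
  induction l', hl using Nat.le_induction with
  | base => exact hd
  | succ l' _ ih => exact Dead_succ h ih

/-- Extendible strings. -/
def Ext (K M : ℕ) (D : ℕ → ℕ) (m w : ℕ) : Prop := ∀ l, ¬ Dead K M D m w l

theorem Ext.TA {m w : ℕ} (h : Ext K M D m w) : TA K M D m w := by
  have := h 0
  simpa [Dead] using this

theorem Ext_zero (h : Good K M q X D) (hK : 2 ≤ K) (hM : K ^ (q + 2) ≤ M) : Ext K M D 0 0 := by
  intro l hd
  obtain ⟨y, hy, -, hT⟩ := TA_nonempty h hK hM l
  exact hd (pre M y l) (pre_lt hy l) (by simpa using hT)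

theorem Ext_child (h : Good K M q X D) {m w : ℕ} (hE : Ext K M D m w) :
    ∃ a < M, Ext K M D (m + 1) (M * w + a) := by
  by_contra hno
  push Not at hno
  have : ∀ a, ∃ l, a < M → Dead K M D (m + 1) (M * w + a) l := by
    intro a
    by_cases ha : a < M
    · have := hno a ha
      unfold Ext at this
      push Not at this
      obtain ⟨l, hl⟩ := this
      exact ⟨l, fun _ => hl⟩
    · exact ⟨0, fun h => absurd h ha⟩
  choose l hl using this
  set B := (Finset.range M).sup l with hB
  have hall : ∀ a < M, Dead K M D (m + 1) (M * w + a) B := fun a ha =>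
    Dead_mono h (Finset.le_sup (f := l) (Finset.mem_range.2 ha)) (hl a ha)
  refine hE (B + 1) fun v hv hT => ?_
  have hM : 0 < M := by
    rcases Nat.eq_zero_or_pos M with h0 | h0
    · subst h0; simp at hv
    · exact h0
  have hp : 0 < M ^ B := pow_pos hM B
  have h1 : v / M ^ B < M := by
    rw [Nat.div_lt_iff_lt_mul hp, ← pow_succ']
    exact hv
  refine hall _ h1 (v % M ^ B) (Nat.mod_lt _ hp) ?_
  have e1 : m + 1 + B = m + (B + 1) := by omega
  have e2 : (M * w + v / M ^ B) * M ^ B + v % M ^ B = w * M ^ (B + 1) + v := by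
    have := Nat.div_add_mod v (M ^ B)
    rw [pow_succ]
    calc _ = w * (M ^ B * M) + (M ^ B * (v / M ^ B) + v % M ^ B) := by ring
      _ = _ := by rw [this]
  rw [e1, e2]
  exact hT

variable {Dt : ℕ → ℕ → ℕ}

theorem col_zero (hD : ∀ m, ∀ᶠ t in Filter.atTop, Dt t m = D m) {m w a : ℕ}
    (hc : ∃ᶠ t in Filter.atTop, ¬ Bad K M (Dt t) m w a t)
    {b : ℕ} (hab : a ≤ b) (hb : b < M) (hE : Ext K M D (m + 1) (M * w + b)) :
    Ext K M D (m + 1) (M * w + a) := by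
  by_contra hno
  have hlt : a < b := by
    rcases Nat.eq_or_lt_of_le hab with h | h
    · subst h; exact absurd hE hno
    · exact h
  unfold Ext at hno
  push Not at hno
  obtain ⟨l, hl⟩ := hno
  have h1 := (Dead_TTP K M (α := ℕ) (m := fun _ => m + 1) (w := fun _ => M * w + a)
    (l := fun l => l) (Primrec.const _) (Primrec.const _) Primrec.id).cont hD l
  have h2 := ((Dead_TTP K M (α := ℕ × ℕ) (m := fun _ => m + 1) (w := fun _ => M * w + b)
    (l := fun p => p.2) (Primrec.const _) (Primrec.const _) Primrec.snd).not.all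
      (b := fun l => l + 1) Primrec.succ).cont hD l
  apply hc
  filter_upwards [h1, h2, Filter.eventually_ge_atTop l] with t ht1 ht2 htl
  rw [not_not]
  exact ⟨l, by omega, ht1.2 hl, b, hb, hlt, ht2.2 fun l' _ => hE l'⟩

theorem col_one (hD : ∀ m, ∀ᶠ t in Filter.atTop, Dt t m = D m) {m w a : ℕ}
    (hc : ∃ᶠ t in Filter.atTop, Bad K M (Dt t) m w a t)
    {b : ℕ} (hab : a ≤ b) (hb : b < M) (hE : Ext K M D (m + 1) (M * w + b)) :
    ∃ b ≥ a + 1, b < M ∧ Ext K M D (m + 1) (M * w + b) := by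
  by_contra hno
  push Not at hno
  have hEa : Ext K M D (m + 1) (M * w + a) := by
    rcases Nat.eq_or_lt_of_le hab with h | h
    · subst h; exact hE
    · exact absurd hE (hno b h hb)
  have : ∀ b, ∃ l, a < b → b < M → Dead K M D (m + 1) (M * w + b) l := by
    intro b
    by_cases hb : a < b ∧ b < M
    · have := hno b hb.1 hb.2
      unfold Ext at this
      push Not at this
      obtain ⟨l, hl⟩ := this
      exact ⟨l, fun _ _ => hl⟩
    · exact ⟨0, fun h h' => absurd ⟨h, h'⟩ hb⟩
  choose l hl using this
  set B := (Finset.range M).sup l with hB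
  have h2 := ((Dead_TTP K M (α := ℕ × ℕ) (m := fun _ => m + 1) (w := fun _ => M * w + a)
    (l := fun p => p.2) (Primrec.const _) (Primrec.const _) Primrec.snd).not.all
      (b := fun l => l + 1) Primrec.succ).cont hD B
  have h1 : ∀ᶠ t in Filter.atTop, ∀ b ∈ Finset.range M, a < b →
      Dead K M (Dt t) (m + 1) (M * w + b) (l b) := by
    rw [Filter.eventually_all_finset]
    intro b hb
    filter_upwards [(Dead_TTP K M (α := ℕ) (m := fun _ => m + 1) (w := fun _ => M * w + b)
      (l := fun l => l) (Primrec.const _) (Primrec.const _) Primrec.id).cont hD (l b)] with t ht hab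
    exact ht.2 (hl b hab (Finset.mem_range.1 hb))
  obtain ⟨t, ⟨l₀, hl₀, hd, b', hb', hab', hnd⟩, ht1, ht2⟩ := (hc.and_eventually (h1.and h2)).exists
  have hlB : l b' ≤ B := Finset.le_sup (f := l) (Finset.mem_range.2 hb')
  have h3 := ht2.2 fun l' _ => hEa l'
  have h4 : B < l₀ := by
    by_contra hle
    exact h3 l₀ (by omega) hd
  exact hnd (l b') (by omega) (ht1 b' (Finset.mem_range.2 hb') hab')

end

/-- The choice of the next digit. -/
noncomputable def stepZ (M : ℕ) (col : ℕ → ℕ) (p : ℕ) : ℕ :=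
  leastB (fun a => col (Nat.pair p.unpair.1 (Nat.pair p.unpair.2 a)) = 0) M

/-- The selected strings. -/
noncomputable def selW (M : ℕ) (col : ℕ → ℕ) : ℕ → ℕ :=
  fun n => Nat.rec 0 (fun y i => M * (Nat.pair y i).unpair.2 + stepZ M col (Nat.pair y i)) n

/-- The selected path. -/
noncomputable def selZ (M : ℕ) (col : ℕ → ℕ) (m : ℕ) : ℕ := stepZ M col (Nat.pair m (selW M col m))

theorem selW_succ (M : ℕ) (col : ℕ → ℕ) (m : ℕ) :
    selW M col (m + 1) = M * selW M col m + selZ M col m := by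
  have : selW M col (m + 1) = M * (Nat.pair m (selW M col m)).unpair.2 +
    stepZ M col (Nat.pair m (selW M col m)) := rfl
  rw [this, Nat.unpair_pair]
  rfl

theorem selW_pre (M : ℕ) (col : ℕ → ℕ) (m : ℕ) : selW M col m = pre M (selZ M col) m := by
  induction m with
  | zero => rfl
  | succ m ih => rw [selW_succ, pre, ih]

theorem stepZ_TT (M : ℕ) : TT (stepZ M) := by
  have h1 : TTP (fun (col : ℕ → ℕ) (p : ℕ × ℕ) =>
      col (Nat.pair p.1.unpair.1 (Nat.pair p.1.unpair.2 p.2)) = 0) :=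
    TTP.eq (TT.query (npair_prim (fst_prim Primrec.fst) (npair_prim (snd_prim Primrec.fst)
      Primrec.snd))) (TT.of_prim (Primrec.const 0))
  have h2 := h1.least (b := fun _ => M) (Primrec.const M)
  exact h2

theorem selZ_recIn (M : ℕ) {O col : ℕ → ℕ} (h : RecIn O col) : RecIn O (selZ M col) := by
  have h1 : RecIn O (stepZ M col) := (stepZ_TT M).recIn h
  have h2 : TT (fun (s : ℕ → ℕ) (p : ℕ) => M * p.unpair.2 + s p) :=
    TT.out₂ Primrec.nat_add (TT.of_prim (times_prim (Primrec.const M) (snd_prim Primrec.id)))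
      (TT.query Primrec.id)
  have h3 : RecIn O (selW M col) := RecIn.prec 0 (h2.recIn h1)
  exact h1.comp (RecIn.pair (recIn_prim Primrec.id) h3)

theorem selection {K M q : ℕ} {X D : ℕ → ℕ} (h : Good K M q X D) (hr : LimRed X D q)
    (hK : 2 ≤ K) (hM : K ^ (q + 2) ≤ M) :
    ∃ φ : (ℕ → ℕ) → ℕ → ℕ, TT φ ∧ (∀ O a, φ O a < 2) ∧
      ∀ (H : ℕ → Set ℕ) (col : ℕ → ℕ), (∀ i, (H i).Infinite) →
        (∀ i, ∀ s : Finset ℕ, ↑s ⊆ H i → s.card = q + 1 → φ X (Nat.pair i (bcode s)) = col i) →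
        GoodV K (q + 1) X (fun c => selZ M col (2 * c + 1)) := by
  classical
  obtain ⟨E, L, hR, hL, hlim⟩ := hr
  have h0M : 0 < M := lt_of_lt_of_le (pow_pos (by omega) _) hM
  -- the coloring of pairs (index, stage)
  have pi : Primrec (fun p : ℕ => p.unpair.1) := fst_prim Primrec.id
  have hψ : TT (fun O (p : ℕ) => if Bad K M O p.unpair.1.unpair.1 p.unpair.1.unpair.2.unpair.1
      p.unpair.1.unpair.2.unpair.2 p.unpair.2 then 1 else 0) :=
    (TTP.ite (Bad_TTP K M (fst_prim pi) (fst_prim (snd_prim pi)) (snd_prim (snd_prim pi))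
      (snd_prim Primrec.id)) (TT.of_prim (Primrec.const 1)) (TT.of_prim (Primrec.const 0))).of_eq
      fun O a => by congr
  have hc : Primrec (fun a : ℕ => Nat.log 2 a.unpair.2) := log_prim.comp (snd_prim Primrec.id)
  have hG : TT (fun O (p : ℕ × ℕ) => L O (Nat.log 2 p.1.unpair.2, p.2)) :=
    hL.pre (Primrec.pair (hc.comp Primrec.fst) Primrec.snd)
  have hρ : Primrec (fun a : ℕ => Nat.pair a.unpair.1 (Nat.log 2 a.unpair.2)) :=
    npair_prim (fst_prim Primrec.id) hc
  have h1 := TT.subst hψ hG hρ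
  obtain ⟨φ, hφ, hφ2, hφR⟩ := hR _ h1
  refine ⟨φ, hφ, hφ2 fun O a => ?_, fun H col hH hcol => ?_⟩
  · dsimp only; split <;> omega
  have hfreq : ∀ m w a, ∃ᶠ t in Filter.atTop,
      (if Bad K M (fun x => L E (t, x)) m w a t then 1 else 0) =
        col (Nat.pair m (Nat.pair w a)) := by
    intro m w a
    have h2 := hφR 1 (Nat.pair m (Nat.pair w a)) _ _ (hH (Nat.pair m (Nat.pair w a))) (by
      intro s hs hc
      exact hcol _ s hs (by omega))
    rw [Filter.frequently_atTop]
    intro N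
    obtain ⟨t, ht, htN⟩ := (hH (Nat.pair m (Nat.pair w a))).exists_gt N
    refine ⟨t, htN.le, ?_⟩
    have h3 := h2 {t} (by simpa using ht) (by simp)
    have e : bcode {t} = 2 ^ t := by simp [bcode]
    simp only [Nat.unpair_pair, e, Nat.log_pow (show 1 < 2 by norm_num)] at h3
    exact h3
  have hext : ∀ m, Ext K M D m (selW M col m) := by
    intro m
    induction m with
    | zero => exact Ext_zero h hK hM
    | succ m ih =>
      obtain ⟨b₀, hb₀, hE₀⟩ := Ext_child h ih
      set w := selW M col m with hw
      have hz : ∀ a, col (Nat.pair m (Nat.pair w a)) = 0 →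
          (∃ b ≥ a, b < M ∧ Ext K M D (m + 1) (M * w + b)) → Ext K M D (m + 1) (M * w + a) := by
        rintro a ha ⟨b, hab, hb, hE⟩
        refine col_zero (Dt := fun t x => L E (t, x)) hlim ?_ hab hb hE
        refine (hfreq m w a).mono fun t ht => ?_
        rw [ha] at ht
        intro hB
        rw [if_pos hB] at ht
        omega
      have ho : ∀ a, col (Nat.pair m (Nat.pair w a)) ≠ 0 →
          (∃ b ≥ a, b < M ∧ Ext K M D (m + 1) (M * w + b)) →
          ∃ b ≥ a + 1, b < M ∧ Ext K M D (m + 1) (M * w + b) := by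
        rintro a ha ⟨b, hab, hb, hE⟩
        refine col_one (Dt := fun t x => L E (t, x)) hlim ?_ hab hb hE
        refine (hfreq m w a).mono fun t ht => ?_
        by_contra hB
        rw [if_neg hB] at ht
        exact ha ht.symm
      have hall : ∀ a, (∀ a' < a, col (Nat.pair m (Nat.pair w a')) ≠ 0) →
          ∃ b ≥ a, b < M ∧ Ext K M D (m + 1) (M * w + b) := by
        intro a
        induction a with
        | zero => intro _; exact ⟨b₀, Nat.zero_le _, hb₀, hE₀⟩
        | succ a iha => intro hlt; exact ho a (hlt a (by omega)) (iha fun a' h' => hlt a' (by omega))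
      have hex : ∃ a < M, col (Nat.pair m (Nat.pair w a)) = 0 := by
        by_contra hno
        push Not at hno
        obtain ⟨b, hb, hb', -⟩ := hall M hno
        omega
      have hs : selZ M col m = leastB (fun a => col (Nat.pair m (Nat.pair w a)) = 0) M := by
        unfold selZ stepZ
        simp only [Nat.unpair_pair, ← hw]
      rw [selW_succ, ← hw, hs]
      obtain ⟨hl1, hl2⟩ := leastB_spec hex
      refine hz _ hl2 (hall _ fun a' ha' h0 => ?_)
      have := leastB_min (P := fun a => col (Nat.pair m (Nat.pair w a)) = 0) (ha'.trans hl1) h0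
      omega
  refine path_goodV h hK (fun i => leastB_lt h0M) fun t => ?_
  rw [← selW_pre]
  exact (hext t).TA

end Paper
namespace Paper

/-! ### The homogeneous set -/

/-- The number `y` may be added when the state is `C`. -/
def AddP (K n r : ℕ) (V : ℕ → ℕ) (y C : ℕ) : Prop :=
  C ≤ y ∧ (∀ c < C, V c % K ^ n = V (c + 2 ^ y) / K) ∧ V (2 ^ y) % K = r

open Classical in
/-- The state of the greedy construction. -/
noncomputable def stC (K n r : ℕ) (V : ℕ → ℕ) : ℕ → ℕ := fun x =>
  Nat.rec 1 (fun y i => if AddP K n r V (Nat.pair y i).unpair.1 (Nat.pair y i).unpair.2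
    then 2 ^ ((Nat.pair y i).unpair.1 + 1) else (Nat.pair y i).unpair.2) x

/-- The greedy set. -/
def greedy (K n r : ℕ) (V : ℕ → ℕ) : Set ℕ := {x | AddP K n r V x (stC K n r V x)}

theorem AddP_TTP (K n r : ℕ) :
    TTP (fun V (p : ℕ) => AddP K n r V p.unpair.1 p.unpair.2) := by
  have h1 : TTP (fun V (p : ℕ × ℕ) => V p.2 % K ^ n = V (p.2 + 2 ^ p.1.unpair.1) / K) :=
    TTP.eq (TT.out₂ Primrec.nat_mod (TT.query Primrec.snd) (TT.of_prim (Primrec.const (K ^ n))))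
      (TT.out₂ Primrec.nat_div (TT.query (ppow (fst_prim Primrec.fst) Primrec.snd))
        (TT.of_prim (Primrec.const K)))
  have h2 := h1.all (b := fun p : ℕ => p.unpair.2) (snd_prim Primrec.id)
  have h3 : TTP (fun V (p : ℕ) => V (2 ^ p.unpair.1) % K = r) :=
    TTP.eq (TT.out₂ Primrec.nat_mod (TT.query (pow_prim (Primrec.const 2) (fst_prim Primrec.id)))
      (TT.of_prim (Primrec.const K))) (TT.of_prim (Primrec.const r))
  exact (TTP.le (snd_prim Primrec.id) (fst_prim Primrec.id)).and (h2.and h3)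

theorem greedy_recIn (K n r : ℕ) {O V : ℕ → ℕ} (hV : RecIn O V) :
    RecIn O (chi (greedy K n r V)) := by
  classical
  have h1 := (TTP.ite (AddP_TTP K n r) (TT.of_prim (pow_prim (Primrec.const 2)
    (Primrec.succ.comp (fst_prim Primrec.id)))) (TT.of_prim (snd_prim Primrec.id))).recIn hV
  have h2 : RecIn O (stC K n r V) := RecIn.prec 1 h1
  have h3 := (TTP.ite (AddP_TTP K n r) (TT.of_prim (Primrec.const 1))
    (TT.of_prim (Primrec.const 0))).recIn hV
  have h4 := h3.comp (RecIn.pair (recIn_prim Primrec.id) h2)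
  have e : chi (greedy K n r V) = fun x => if AddP K n r V (Nat.pair x (stC K n r V x)).unpair.1
      (Nat.pair x (stC K n r V x)).unpair.2 then 1 else 0 := by
    funext x
    simp only [Nat.unpair_pair, chi, Set.indicator_apply, greedy, Set.mem_ofPred_eq]
  rw [e]
  convert h4 using 1
  funext x
  simp only [id]

section
variable {K n r : ℕ} {V : ℕ → ℕ}

theorem stC_pos {x : ℕ} (h : AddP K n r V x (stC K n r V x)) :
    stC K n r V (x + 1) = 2 ^ (x + 1) := by
  classical
  have : stC K n r V (x + 1) = if AddP K n r V (Nat.pair x (stC K n r V x)).unpair.1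
      (Nat.pair x (stC K n r V x)).unpair.2 then 2 ^ ((Nat.pair x (stC K n r V x)).unpair.1 + 1)
      else (Nat.pair x (stC K n r V x)).unpair.2 := by
    unfold stC; congr
  simp only [Nat.unpair_pair] at this
  rw [this, if_pos h]

theorem stC_neg {x : ℕ} (h : ¬ AddP K n r V x (stC K n r V x)) :
    stC K n r V (x + 1) = stC K n r V x := by
  classical
  have : stC K n r V (x + 1) = if AddP K n r V (Nat.pair x (stC K n r V x)).unpair.1
      (Nat.pair x (stC K n r V x)).unpair.2 then 2 ^ ((Nat.pair x (stC K n r V x)).unpair.1 + 1)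
      else (Nat.pair x (stC K n r V x)).unpair.2 := by
    unfold stC; congr
  simp only [Nat.unpair_pair] at this
  rw [this, if_neg h]

theorem stC_mono : Monotone (stC K n r V) := by
  apply monotone_nat_of_le_succ
  intro x
  by_cases h : AddP K n r V x (stC K n r V x)
  · rw [stC_pos h]
    have h1 := h.1
    have h2 : x + 1 < 2 ^ (x + 1) := Nat.lt_two_pow_self
    omega
  · rw [stC_neg h]

theorem bcode_lt_stC {s : Finset ℕ} (hs : ↑s ⊆ greedy K n r V) {x : ℕ} (hx : ∀ i ∈ s, i < x) :
    bcode s < stC K n r V x := by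
  rcases s.eq_empty_or_nonempty with h | h
  · subst h
    have h0 : stC K n r V 0 = 1 := rfl
    have := stC_mono (K := K) (n := n) (r := r) (V := V) (Nat.zero_le x)
    simp only [bcode, Finset.sum_empty]
    omega
  · have hy := s.max'_mem h
    set y := s.max' h
    have h1 : bcode s < 2 ^ (y + 1) := bcode_lt fun i hi => Nat.lt_succ_of_le (s.le_max' i hi)
    have h2 := stC_pos (hs hy)
    have h3 := stC_mono (K := K) (n := n) (r := r) (V := V) (Nat.succ_le_of_lt (hx y hy))
    rw [Nat.succ_eq_add_one, h2] at h3
    omega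

theorem greedy_infinite
    (h : ∀ C, ∃ x ≥ C, (∀ c < C, V c % K ^ n = V (c + 2 ^ x) / K) ∧ V (2 ^ x) % K = r) :
    (greedy K n r V).Infinite := by
  rw [Set.infinite_iff_exists_gt]
  intro N
  by_contra hno
  push Not at hno
  have hst : ∀ x, stC K n r V (N + 1 + x) = stC K n r V (N + 1) := by
    intro x
    induction x with
    | zero => rfl
    | succ x ih =>
      rw [← add_assoc, stC_neg, ih]
      intro hA
      have := hno _ hA
      omega
  obtain ⟨x, hx, h1, h2⟩ := h (max (N + 1) (stC K n r V (N + 1)))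
  have hx1 : N + 1 ≤ x := le_trans (le_max_left _ _) hx
  have hx2 : stC K n r V (N + 1) ≤ x := le_trans (le_max_right _ _) hx
  have hs := hst (x - (N + 1))
  rw [Nat.add_sub_cancel' hx1] at hs
  have : x ∈ greedy K n r V := by
    refine ⟨by rw [hs]; exact hx2, fun c hc => h1 c ?_, h2⟩
    rw [hs] at hc
    exact lt_of_lt_of_le hc (le_max_right _ _)
  have := hno x this
  omega

theorem greedy_digit (j : ℕ) : j ≤ n → ∀ s : Finset ℕ, ↑s ⊆ greedy K n r V → s.card = j + 1 →
    V (bcode s) / K ^ j % K = r := by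
  induction j with
  | zero =>
    intro _ s hs hc
    obtain ⟨x, rfl⟩ := Finset.card_eq_one.1 hc
    have hx : x ∈ greedy K n r V := hs (by simp)
    simpa [bcode] using hx.2.2
  | succ j ih =>
    intro hj s hs hc
    have hne : s.Nonempty := Finset.card_pos.1 (by omega)
    have hx := s.max'_mem hne
    set x := s.max' hne with hxd
    set s' := s.erase x with hs'
    have hlt : ∀ i ∈ s', i < x := fun i hi =>
      lt_of_le_of_ne (s.le_max' i (Finset.mem_of_mem_erase hi)) (Finset.ne_of_mem_erase hi)
    have hsub : ↑s' ⊆ greedy K n r V := fun i hi => hs (Finset.mem_of_mem_erase hi)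
    have hcard : s'.card = j + 1 := by rw [hs', Finset.card_erase_of_mem hx]; omega
    have e : bcode s = bcode s' + 2 ^ x := by
      rw [← bcode_insert (Finset.notMem_erase x s), Finset.insert_erase hx]
    have h1 := (hs hx).2.1 _ (bcode_lt_stC hsub hlt)
    rw [← e] at h1
    rw [pow_succ', ← Nat.div_div_eq_div_mul, ← h1]
    have e2 : K ^ n = K ^ j * (K * K ^ (n - j - 1)) := by
      rw [← pow_succ', ← pow_add]; congr 1; omega
    rw [e2, Nat.mod_mul_right_div_self, Nat.mod_mul_right_mod]
    exact ih (by omega) s' hsub hcard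

end

theorem final_set {K n : ℕ} {X V : ℕ → ℕ} (h : GoodV K n X V) (hK : 2 ≤ K) :
    ∃ Hf : Set ℕ, Hf.Infinite ∧
      (∃ r, ∀ s : Finset ℕ, ↑s ⊆ Hf → s.card = n + 1 → X (bcode s) = r) ∧
      ∀ O, RecIn O V → RecIn O (chi Hf) := by
  have hr : ∃ r, ∀ C, ∃ x ≥ C, (∀ c < C, V c % K ^ n = V (c + 2 ^ x) / K) ∧ V (2 ^ x) % K = r := by
    by_contra hno
    push Not at hno
    choose C hC using hno
    obtain ⟨x, hx, h1⟩ := h.inv ((Finset.range K).sup C)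
    have hlt : V (2 ^ x) % K < K := Nat.mod_lt _ (by omega)
    have hle : C (V (2 ^ x) % K) ≤ (Finset.range K).sup C :=
      Finset.le_sup (f := C) (Finset.mem_range.2 hlt)
    exact hC _ x (by omega) (fun c hc => h1 c (by omega)) rfl
  obtain ⟨r, hr⟩ := hr
  refine ⟨greedy K n r V, greedy_infinite hr, ⟨r, fun s hs hc => ?_⟩, fun O hO =>
    greedy_recIn K n r hO⟩
  rw [← greedy_digit n le_rfl s hs hc, h.top, Nat.mod_eq_of_lt]
  rw [← h.top, Nat.div_lt_iff_lt_mul (pow_pos (by omega) _), ← pow_succ']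
  exact h.bound _

end Paper
namespace Paper

/-! ### Coding of finite sets -/

/-- The list coded by a number. -/
def ofL (m : ℕ) : List ℕ := Denumerable.ofNat (List ℕ) m

theorem decode_finset (m : ℕ) : ((Encodable.decode (α := Finset ℕ) m).getD ∅) =
    if (ofL m).Nodup then (ofL m).toFinset else ∅ := by
  have h1 : (Encodable.decode (α := List ℕ) m) = some (ofL m) := Denumerable.decode_eq_ofNat _ _
  have h2 : (Encodable.decode (α := Multiset ℕ) m) = some (ofL m : Multiset ℕ) := by
    change ((↑) : List ℕ → Multiset ℕ) <$> Encodable.decode (α := List ℕ) m = _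
    rw [h1]; rfl
  have h3 : Encodable.decode (α := Finset ℕ) m =
      if h : (ofL m).Nodup then some ⟨(ofL m : Multiset ℕ), h⟩ else none := by
    have h4 : ∀ inst : DecidablePred (fun s : Multiset ℕ => s.Nodup),
        @Encodable.decode _ (@Subtype.encodable (Multiset ℕ) Multiset.Nodup Multiset.encodable inst) m =
        if h : (ofL m).Nodup then some ⟨(ofL m : Multiset ℕ), h⟩ else none := by
      intro inst
      change Option.bind (Encodable.decode (α := Multiset ℕ) m) _ = _
      rw [h2]
      change (if h : (ofL m : Multiset ℕ).Nodup then some _ else none) = _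
      by_cases hn : (ofL m).Nodup
      · rw [dif_pos hn, dif_pos (Multiset.coe_nodup.2 hn)]
      · rw [dif_neg hn, dif_neg (fun h => hn (Multiset.coe_nodup.1 h))]
    have h5 := congrArg (Option.map (fun a : {s : Multiset ℕ // s.Nodup} =>
      (⟨a.1, a.2⟩ : Finset ℕ))) (h4 fun a =>
        @Multiset.nodupDecidable ℕ (Encodable.decidableEqOfEncodable ℕ) a)
    refine Eq.trans ?_ (h5.trans ?_)
    · unfold Finset.encodable
      rw [@Encodable.decode_ofEquiv _ _ (_)]
      congr 1
    · by_cases hn : (ofL m).Nodup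
      · rw [dif_pos hn, dif_pos hn]; rfl
      · rw [dif_neg hn, dif_neg hn]; rfl
  rw [h3]
  by_cases hn : (ofL m).Nodup
  · rw [dif_pos hn, if_pos hn]
    simp only [Option.getD_some]
    ext x
    rw [List.mem_toFinset, ← Finset.mem_val]
    exact Multiset.mem_coe
  · rw [dif_neg hn, if_neg hn]; rfl

theorem TT.prim {α β : Type*} [Primcodable α] [Primcodable β] {f : α → β}
    (h : TT (fun (_ : ℕ → ℕ) a => f a)) : Primrec f := by
  obtain ⟨u, Φ, hu, hΦ, e⟩ := h
  have : Primrec (fun a => Φ ((List.range (u a)).map zeroO) a) := by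
    refine hΦ.comp ?_ Primrec.id
    exact Primrec.list_map (Primrec.list_range.comp hu) (Primrec.const 0)
  exact this.of_eq fun a => (e zeroO a).symm

theorem bcode_toFinset {l : List ℕ} (h : l.Nodup) :
    bcode l.toFinset = l.foldr (fun x y => 2 ^ x + y) 0 := by
  induction l with
  | nil => rfl
  | cons a l ih =>
    rw [List.nodup_cons] at h
    rw [List.toFinset_cons, bcode_insert (by simpa using h.1), ih h.2, List.foldr_cons, add_comm]

theorem bc_prim : Primrec (fun m => bcode ((Encodable.decode (α := Finset ℕ) m).getD ∅)) := by
  classical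
  have hl : Primrec ofL := Primrec.ofNat _
  have h0 : TTP (fun (_ : ℕ → ℕ) (p : (ℕ × ℕ) × ℕ) => p.2 < p.1.2 →
      ¬ ((ofL p.1.1)[p.2]? = (ofL p.1.1)[p.1.2]?)) := by
    refine TTP.imp (TTP.lt Primrec.snd (Primrec.snd.comp Primrec.fst)) (TTP.not ?_)
    refine TTP.rel Primrec.eq (TT.of_prim ?_) (TT.of_prim ?_)
    · exact Primrec.list_getElem?.comp (hl.comp (Primrec.fst.comp Primrec.fst)) Primrec.snd
    · exact Primrec.list_getElem?.comp (hl.comp (Primrec.fst.comp Primrec.fst))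
        (Primrec.snd.comp Primrec.fst)
  have h1 := (h0.all (b := fun p : ℕ × ℕ => (ofL p.1).length)
    (Primrec.list_length.comp (hl.comp Primrec.fst))).all (b := fun p : ℕ => (ofL p).length)
    (Primrec.list_length.comp hl)
  have h2 : TTP (fun (_ : ℕ → ℕ) m => (ofL m).Nodup) := by
    refine h1.of_iff fun O m => ?_
    rw [List.nodup_iff_getElem?_ne_getElem?]
    constructor
    · intro h i j hij hj
      exact h j hj i (lt_trans hij hj) hij
    · intro h j hj i _ hij
      exact h i j hij hj
  have h3 : Primrec (fun m => (ofL m).foldr (fun x y => 2 ^ x + y) 0) := by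
    refine Primrec.list_foldr (h := fun _ (p : ℕ × ℕ) => 2 ^ p.1 + p.2) hl (Primrec.const 0) ?_
    exact plus_prim (pow_prim (Primrec.const 2) (Primrec.fst.comp Primrec.snd))
      (Primrec.snd.comp Primrec.snd)
  have h4 := TTP.ite h2 (TT.of_prim h3) (TT.of_prim (Primrec.const 0))
  refine TT.prim (h4.of_eq fun _ m => ?_)
  rw [decode_finset]
  by_cases hn : (ofL m).Nodup
  · rw [if_pos hn, if_pos hn, bcode_toFinset hn]
  · rw [if_neg hn, if_neg hn]; rfl

/-- The list of binary digits positions. -/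
def bl (c : ℕ) : List ℕ := (List.range c).filter fun x => c / 2 ^ x % 2 = 1

theorem bl_prim : Primrec bl := by
  have hR : PrimrecRel (fun x c : ℕ => c / 2 ^ x % 2 = 1) :=
    Primrec.eq.comp (mod_prim (quo_prim Primrec.snd (pow_prim (Primrec.const 2) Primrec.fst))
      (Primrec.const 2)) (Primrec.const 1)
  exact hR.listFilter.comp Primrec.list_range Primrec.id

theorem bl_nodup (c : ℕ) : (bl c).Nodup := List.nodup_range.filter _

theorem mem_bl {c x : ℕ} : x ∈ bl c ↔ x ∈ c.bitIndices := by
  unfold bl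
  rw [Nat.mem_bitIndices, Nat.testBit_eq_decide_div_mod_eq]
  simp only [List.mem_filter, List.mem_range, decide_eq_true_eq, and_iff_right_iff_imp]
  intro h
  by_contra hx
  have h1 : c < 2 ^ x := lt_of_le_of_lt (by omega) (Nat.lt_two_pow_self (n := x))
  rw [Nat.div_eq_of_lt h1] at h
  simp at h

theorem bl_toFinset (c : ℕ) : (bl c).toFinset = c.bitIndices.toFinset := by
  ext x; simp only [List.mem_toFinset, mem_bl]

theorem bl_bcode (s : Finset ℕ) : (bl (bcode s)).toFinset = s := by
  rw [bl_toFinset]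
  exact Finset.toFinset_bitIndices_sum_two_pow s

theorem bcode_bl (c : ℕ) : bcode (bl c).toFinset = c := by
  rw [bl_toFinset]
  exact Finset.sum_toFinset_bitIndices_two_pow c

theorem decode_bl (c : ℕ) :
    ((Encodable.decode (α := Finset ℕ) (Encodable.encode (bl c))).getD ∅) = (bl c).toFinset := by
  have : ofL (Encodable.encode (bl c)) = bl c := Denumerable.ofNat_encode _
  rw [decode_finset, this, if_pos (bl_nodup c)]

/-- The coloring as a function of binary codes. -/
def fhat {k : ℕ} (f : Finset ℕ → Fin k) (c : ℕ) : ℕ := f (bl c).toFinset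

theorem fhat_recIn {k : ℕ} (f : Finset ℕ → Fin k) : RecIn (colOracle k f) (fhat f) := by
  have h := (RecIn.oracle (colOracle k f)).comp
    (recIn_prim (O := colOracle k f) (Primrec.encode.comp bl_prim))
  have e : fhat f = fun c => colOracle k f (Encodable.encode (bl c)) := by
    funext c
    unfold fhat colOracle
    rw [decode_bl]
  rw [e]
  exact h

theorem RecIn.trans {O P h : ℕ → ℕ} (hh : RecIn P h) (hP : RecIn O P) : RecIn O h := by
  obtain ⟨c, hc⟩ := hh
  obtain ⟨d, hd⟩ := hP
  suffices H : ∀ c : OCode, ∃ c' : OCode, oeval O c' = oeval P c by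
    obtain ⟨c', hc'⟩ := H c
    exact ⟨c', fun n => by rw [hc']; exact hc n⟩
  intro c
  induction c with
  | zero => exact ⟨.zero, rfl⟩
  | succ => exact ⟨.succ, rfl⟩
  | left => exact ⟨.left, rfl⟩
  | right => exact ⟨.right, rfl⟩
  | oracle => exact ⟨d, by funext n; rw [hd]; rfl⟩
  | pair a b iha ihb =>
    obtain ⟨a', ha⟩ := iha
    obtain ⟨b', hb⟩ := ihb
    exact ⟨.pair a' b', by simp only [oeval, ha, hb]; rfl⟩
  | comp a b iha ihb =>
    obtain ⟨a', ha⟩ := iha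
    obtain ⟨b', hb⟩ := ihb
    exact ⟨.comp a' b', by simp only [oeval, ha, hb]; rfl⟩
  | prec a b iha ihb =>
    obtain ⟨a', ha⟩ := iha
    obtain ⟨b', hb⟩ := ihb
    exact ⟨.prec a' b', by simp only [oeval, ha, hb]; rfl⟩
  | rfind' a iha =>
    obtain ⟨a', ha⟩ := iha
    exact ⟨.rfind' a', by simp only [oeval, ha]; rfl⟩

theorem join_left (f g : ℕ → ℕ) : RecIn (joinF f g) f := by
  have h := (RecIn.oracle (joinF f g)).comp (recIn_prim (two_mul_prim Primrec.id))
  convert h using 1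
  funext n
  simp [joinF]

theorem join_right (f g : ℕ → ℕ) : RecIn (joinF f g) g := by
  have h := (RecIn.oracle (joinF f g)).comp (recIn_prim (two_mul_add_prim Primrec.id))
  convert h using 1
  funext n
  have e1 : (2 * n + 1) / 2 = n := by omega
  have e2 : (2 * n + 1) % 2 = 1 := by omega
  simp [joinF, e1, e2]

/-- Finding tuples inside the given sets. -/
theorem find_tuple (n : ℕ) (H : ℕ → Set ℕ) (hH : ∀ i, (H i).Infinite) :
    ∃ h : ℕ → ℕ, RecIn (seqOracle H) h ∧
      ∀ i, ∃ s : Finset ℕ, ↑s ⊆ H i ∧ s.card = n ∧ h i = bcode s := by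
  classical
  have hb2 : Primrec (fun p : ℕ => bl p.unpair.2) := bl_prim.comp (snd_prim Primrec.id)
  have h0 : TTP (fun S (p : ℕ × ℕ) => ¬ S (Nat.pair p.1.unpair.1
      ((bl p.1.unpair.2).getD p.2 0)) = 0) :=
    (TTP.eq (TT.query (npair_prim (fst_prim Primrec.fst)
      ((Primrec.list_getD 0).comp (hb2.comp Primrec.fst) Primrec.snd)))
      (TT.of_prim (Primrec.const 0))).not
  have h1 := h0.all (b := fun p : ℕ => (bl p.unpair.2).length) (Primrec.list_length.comp hb2)
  have h2 := (TTP.eq (TT.of_prim (Primrec.list_length.comp hb2)) (TT.of_prim (Primrec.const n))).and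
    h1
  have h3 := (TTP.ite h2 (TT.of_prim (Primrec.const 0)) (TT.of_prim (Primrec.const 1))).recIn
    (RecIn.oracle (seqOracle H))
  have hS : ∀ i x, seqOracle H (Nat.pair i x) ≠ 0 ↔ x ∈ H i := by
    intro i x
    simp [seqOracle, chi, Set.indicator_apply]
  obtain ⟨h, hh, hp⟩ := RecIn.search h3 (by
    intro i
    obtain ⟨s, hs, hc⟩ := (hH i).exists_subset_card_eq n
    refine ⟨bcode s, ?_⟩
    rw [if_pos]
    simp only [Nat.unpair_pair]
    refine ⟨?_, fun j hj => ?_⟩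
    · rw [← List.toFinset_card_of_nodup (bl_nodup _), bl_bcode, hc]
    · rw [← ne_eq, hS, List.getD_eq_getElem _ _ hj]
      apply hs
      rw [Finset.mem_coe]
      have h7 := List.mem_toFinset.2 (List.getElem_mem hj)
      rwa [bl_bcode] at h7)
  refine ⟨h, hh, fun i => ⟨(bl (h i)).toFinset, ?_, ?_, (bcode_bl _).symm⟩⟩
  all_goals
    have h5 := hp i
    have h6 : ((bl (h i)).length = n ∧ ∀ x < (bl (h i)).length,
        ¬ seqOracle H (Nat.pair i ((bl (h i)).getD x 0)) = 0) := by
      by_contra hno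
      rw [if_neg (by simpa only [Nat.unpair_pair] using hno)] at h5
      omega
  · intro x hx
    rw [Finset.mem_coe, List.mem_toFinset] at hx
    obtain ⟨j, hj, rfl⟩ := List.getElem_of_mem hx
    have := h6.2 j hj
    rw [← ne_eq, hS, List.getD_eq_getElem _ _ hj] at this
    exact this
  · rw [List.toFinset_card_of_nodup (bl_nodup _), h6.1]

end Paper
namespace Paper

/-- `RT^{n+1}_k` is computably reducible to the parallelization of `RT^n_2`: from any
coloring `f` of `(n+1)`-sets with `k` colors one can `f`-computably produce a sequence
of 2-colorings of `n`-sets such that any sequence of infinite homogeneous sets for them,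
joined with `f`, computes an infinite `f`-homogeneous set. -/
theorem rt_reducible_parallelization (n k : ℕ) (hn : 1 ≤ n) (hk : 1 ≤ k)
    (f : Finset ℕ → Fin k) :
    ∃ g : ℕ → Finset ℕ → Fin 2,
      (∃ h : ℕ → ℕ, RecIn (colOracle k f) h ∧
        ∀ i m : ℕ, h (Nat.pair i m) =
          (g i ((Encodable.decode (α := Finset ℕ) m).getD ∅) : ℕ)) ∧
      ∀ H : ℕ → Set ℕ, (∀ i, (H i).Infinite) → (∀ i, Homog n 2 (g i) (H i)) →
        ∃ Hf : Set ℕ, Hf.Infinite ∧ Homog (n + 1) k f Hf ∧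
          RecIn (joinF (colOracle k f) (seqOracle H)) (chi Hf) := by
  obtain ⟨q, rfl⟩ : ∃ q, n = q + 1 := ⟨n - 1, by omega⟩
  have hK : 2 ≤ k + 1 := by omega
  have hX : ∀ c, fhat f c < k + 1 := fun c => Nat.lt_succ_of_lt (f (bl c).toFinset).isLt
  obtain ⟨D, hD, hr⟩ := levels (n := q) hK hX (le_refl ((k + 1) ^ (q + 2))) q le_rfl
  obtain ⟨φ, hφ, hφ2, hsel⟩ := selection hD hr hK le_rfl
  refine ⟨fun i s => ⟨φ (fhat f) (Nat.pair i (bcode s)), hφ2 _ _⟩,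
    ⟨fun p => φ (fhat f) (Nat.pair p.unpair.1
      (bcode ((Encodable.decode (α := Finset ℕ) p.unpair.2).getD ∅))), ?_, ?_⟩, ?_⟩
  · exact (hφ.recIn (fhat_recIn f)).comp (recIn_prim (npair_prim (fst_prim Primrec.id)
      (bc_prim.comp (snd_prim Primrec.id))))
  · intro i m
    simp only [Nat.unpair_pair]
  · intro H hH hhom
    choose c hc using hhom
    have hcol : ∀ i, ∀ s : Finset ℕ, ↑s ⊆ H i → s.card = q + 1 →
        φ (fhat f) (Nat.pair i (bcode s)) = (c i : ℕ) := by
      intro i s hs hcard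
      have := congrArg Fin.val (hc i s hs hcard)
      exact this
    have hV := hsel H (fun i => (c i : ℕ)) hH hcol
    obtain ⟨Hf, hinf, ⟨r, hhom⟩, hrec⟩ := final_set hV hK
    refine ⟨Hf, hinf, ?_, hrec _ ?_⟩
    · obtain ⟨s₀, hs₀, hc₀⟩ := hinf.exists_subset_card_eq (q + 1 + 1)
      refine ⟨f s₀, fun s hs hcard => Fin.ext ?_⟩
      have e : ∀ s, fhat f (bcode s) = (f s : ℕ) := fun s => by unfold fhat; rw [bl_bcode]
      rw [← e, ← e, hhom s hs hcard, hhom s₀ hs₀ hc₀]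
    · obtain ⟨h, hh, hsp⟩ := find_tuple (q + 1) H hH
      have h1 : RecIn (joinF (colOracle k f) (seqOracle H)) (φ (fhat f)) :=
        hφ.recIn ((fhat_recIn f).trans (join_left _ _))
      have h2 := h1.comp (RecIn.pair (recIn_prim Primrec.id) (hh.trans (join_right _ _)))
      have e : (fun i => (c i : ℕ)) = fun i => φ (fhat f) (Nat.pair (id i) (h i)) := by
        funext i
        obtain ⟨s, hs, hcard, hs'⟩ := hsp i
        rw [hs']
        exact (hcol i s hs hcard).symm
      rw [← e] at h2
      exact (selZ_recIn _ h2).comp (recIn_prim (two_mul_add_prim Primrec.id))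

end Paper
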